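/- arXiv:2009.12962 — 3 statements merged into one kernel-verified Lean document; each statement's English description precedes it below -/
import Mathlib

section
/- Let N ≥ 1, r, s, c ∈ (0,1), α_s, α_r, α_c > 0, and let Ω_s, Ω_r ⊂ ℝ^N be disjoint nonempty open sets. Suppose α > 0 and there exists C > 0 such that for every v ∈ C_c^∞(ℝ^N), ‖v‖_{L²(ℝ^N)}^{2 + 4α/N} ≤ C ‖v‖_{L¹(ℝ^N)}^{4α/N} ( ‖v‖_{L²(ℝ^N)}² + Q(v) ). Then α ≤ min{r, s}. -/
open MeasureTheory ENNReal

/-- The squared Gagliardo seminorm `[v]_{s,Ω}²` on an open set `Ω ⊆ ℝ^N`. -/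
noncomputable def gagliardoSq {N : ℕ} (s : ℝ) (Ω : Set (EuclideanSpace ℝ (Fin N)))
    (v : EuclideanSpace ℝ (Fin N) → ℝ) : ℝ≥0∞ :=
  ∫⁻ x in Ω, ∫⁻ y in Ω, ENNReal.ofReal ((v x - v y) ^ 2 / ‖x - y‖ ^ ((N : ℝ) + 2 * s))

/-- The cross (coupling) term between the two domains. -/
noncomputable def crossTerm {N : ℕ} (c : ℝ) (Ωs Ωr : Set (EuclideanSpace ℝ (Fin N)))
    (v : EuclideanSpace ℝ (Fin N) → ℝ) : ℝ≥0∞ :=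
  ∫⁻ x in Ωs, ∫⁻ y in Ωr, ENNReal.ofReal ((v x - v y) ^ 2 / ‖x - y‖ ^ ((N : ℝ) + 2 * c))

/-- The energy form `Q` of the coupled nonlocal problem. -/
noncomputable def energyQ {N : ℕ} (r s c αs αr αc : ℝ)
    (Ωs Ωr : Set (EuclideanSpace ℝ (Fin N))) (v : EuclideanSpace ℝ (Fin N) → ℝ) : ℝ≥0∞ :=
  ENNReal.ofReal (αs / 4) * gagliardoSq s Ωs v + ENNReal.ofReal (αr / 4) * gagliardoSq r Ωr v +
    ENNReal.ofReal (αc / 2) * crossTerm c Ωs Ωr v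


/-- The radial model kernel. -/
noncomputable def nashKern (N : ℕ) (p : ℝ) (z : EuclideanSpace ℝ (Fin N)) : ℝ≥0∞ :=
  ENNReal.ofReal (min 1 (‖z‖ ^ 2) / ‖z‖ ^ p)

lemma nashKern_measurable (N : ℕ) (p : ℝ) : Measurable (nashKern N p) := by
  unfold nashKern
  fun_prop

lemma nashKern_finite (N : ℕ) (hN : 1 ≤ N) (s : ℝ) (hs : s ∈ Set.Ioo (0 : ℝ) 1) :
    ∫⁻ z, nashKern N ((N : ℝ) + 2 * s) z ≠ ⊤ := by
  obtain ⟨hs0, hs1⟩ := hs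
  have : Nonempty (Fin N) := ⟨⟨0, hN⟩⟩
  have hint : Integrable (fun z : EuclideanSpace ℝ (Fin N) =>
      (fun t : ℝ => min 1 (t ^ 2) / t ^ ((N : ℝ) + 2 * s)) ‖z‖) volume := by
    refine (integrable_fun_norm_addHaar volume
      (f := fun t : ℝ => min 1 (t ^ 2) / t ^ ((N : ℝ) + 2 * s))).2 ?_
    have hmeas : Measurable (fun y : ℝ => y ^ (N - 1) • (min 1 (y ^ 2) / y ^ ((N : ℝ) + 2 * s))) := by
      fun_prop
    have hpow : ∀ y : ℝ, 0 < y → y ^ (N - 1) = y ^ ((N : ℝ) - 1) := by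
      intro y hy
      rw [← Real.rpow_natCast, Nat.cast_sub hN]; simp
    simp only [finrank_euclideanSpace, Fintype.card_fin]
    rw [← Set.Ioc_union_Ioi_eq_Ioi (zero_le_one (α := ℝ))]
    refine IntegrableOn.union ?_ ?_
    · have h1 : IntegrableOn (fun y : ℝ => y ^ (1 - 2 * s)) (Set.Ioc 0 1) := by
        rw [integrableOn_Ioc_iff_integrableOn_Ioo,
          intervalIntegral.integrableOn_Ioo_rpow_iff one_pos]
        linarith
      refine h1.mono' hmeas.aestronglyMeasurable ?_
      refine (ae_restrict_iff' measurableSet_Ioc).2 (Filter.Eventually.of_forall fun y hy => ?_)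
      have hy0 : 0 < y := hy.1
      rw [Real.norm_of_nonneg (by positivity), smul_eq_mul, hpow y hy0]
      calc y ^ ((N : ℝ) - 1) * (min 1 (y ^ 2) / y ^ ((N : ℝ) + 2 * s))
          ≤ y ^ ((N : ℝ) - 1) * (y ^ (2 : ℝ) / y ^ ((N : ℝ) + 2 * s)) := by
            gcongr
            rw [Real.rpow_two]; exact min_le_right _ _
        _ = y ^ (1 - 2 * s) := by
            rw [← Real.rpow_sub hy0, ← Real.rpow_add hy0]; congr 1; ring
    · have h1 : IntegrableOn (fun y : ℝ => y ^ (-1 - 2 * s)) (Set.Ioi 1) :=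
        integrableOn_Ioi_rpow_of_lt (by linarith) one_pos
      refine h1.mono' hmeas.aestronglyMeasurable ?_
      refine (ae_restrict_iff' measurableSet_Ioi).2 (Filter.Eventually.of_forall fun y hy => ?_)
      have hy0 : 0 < y := lt_trans one_pos hy
      rw [Real.norm_of_nonneg (by positivity), smul_eq_mul, hpow y hy0]
      calc y ^ ((N : ℝ) - 1) * (min 1 (y ^ 2) / y ^ ((N : ℝ) + 2 * s))
          ≤ y ^ ((N : ℝ) - 1) * (1 / y ^ ((N : ℝ) + 2 * s)) := by
            gcongr
            exact min_le_left _ _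
        _ = y ^ (-1 - 2 * s) := by
            rw [one_div, ← Real.rpow_neg hy0.le, ← Real.rpow_add hy0]; congr 1; ring
  have h2 := hint.lintegral_lt_top
  exact h2.ne

lemma nashKern_scale (N : ℕ) (p ε : ℝ) (hε : 0 < ε) :
    ∫⁻ z, nashKern N p (ε⁻¹ • z) = ENNReal.ofReal (ε ^ N) * ∫⁻ z, nashKern N p z := by
  have h := lintegral_map (μ := (volume : Measure (EuclideanSpace ℝ (Fin N))))
    (nashKern_measurable N p) (g := fun z => ε⁻¹ • z) (by fun_prop)
  rw [← h, Measure.map_addHaar_smul _ (inv_ne_zero hε.ne')]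
  simp [abs_of_pos hε]

/-- Domination of a double integral. -/
lemma nash_dbl {N : ℕ} (A A' B : Set (EuclideanSpace ℝ (Fin N)))
    (hA : MeasurableSet A) (hA' : MeasurableSet A') (hB : MeasurableSet B)
    (F : EuclideanSpace ℝ (Fin N) → EuclideanSpace ℝ (Fin N) → ℝ≥0∞)
    (g : EuclideanSpace ℝ (Fin N) → ℝ≥0∞) (hg : Measurable g)
    (hF : ∀ x ∈ A, ∀ y ∈ A', F x y ≤ (B.indicator 1 x + B.indicator 1 y) * g (x - y)) :
    ∫⁻ x in A, ∫⁻ y in A', F x y ≤ 2 * volume B * ∫⁻ z, g z := by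
  have hBm : Measurable (B.indicator (1 : EuclideanSpace ℝ (Fin N) → ℝ≥0∞)) :=
    measurable_one.indicator hB
  calc ∫⁻ x in A, ∫⁻ y in A', F x y
      ≤ ∫⁻ x in A, ∫⁻ y in A', (B.indicator 1 x + B.indicator 1 y) * g (x - y) :=
        setLIntegral_mono' hA fun x hx => setLIntegral_mono' hA' fun y hy => hF x hx y hy
    _ ≤ ∫⁻ x, ∫⁻ y, (B.indicator 1 x + B.indicator 1 y) * g (x - y) :=
        (setLIntegral_le_lintegral _ _).trans
          (lintegral_mono fun x => setLIntegral_le_lintegral _ _)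
    _ = ∫⁻ x, (∫⁻ y, B.indicator 1 x * g (x - y)) + ∫⁻ y, B.indicator 1 y * g (x - y) := by
        refine lintegral_congr fun x => ?_
        simp_rw [add_mul]
        rw [lintegral_add_left (by fun_prop)]
    _ = (∫⁻ x, ∫⁻ y, B.indicator 1 x * g (x - y)) + ∫⁻ x, ∫⁻ y, B.indicator 1 y * g (x - y) := by
        rw [lintegral_add_left]
        refine Measurable.lintegral_prod_right (f := fun x y : EuclideanSpace ℝ (Fin N) =>
            B.indicator (1 : EuclideanSpace ℝ (Fin N) → ℝ≥0∞) x * g (x - y)) ?_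
        fun_prop
    _ = (∫⁻ x, ∫⁻ y, B.indicator 1 x * g (x - y)) + ∫⁻ y, ∫⁻ x, B.indicator 1 y * g (x - y) := by
        congr 1
        rw [lintegral_lintegral_swap]
        exact Measurable.aemeasurable (by fun_prop)
    _ = 2 * volume B * ∫⁻ z, g z := by
        have h1 : ∀ x : EuclideanSpace ℝ (Fin N), ∫⁻ y, B.indicator 1 x * g (x - y)
            = B.indicator 1 x * ∫⁻ z, g z := by
          intro x
          rw [lintegral_const_mul _ (by fun_prop), lintegral_sub_left_eq_self]
        have h2 : ∀ y : EuclideanSpace ℝ (Fin N), ∫⁻ x, B.indicator 1 y * g (x - y)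
            = B.indicator 1 y * ∫⁻ z, g z := by
          intro x
          rw [lintegral_const_mul _ (by fun_prop), lintegral_sub_right_eq_self]
        simp_rw [h1, h2]
        rw [lintegral_mul_const _ hBm, lintegral_indicator_one hB]
        ring

/-- The coupling term is symmetric. -/
lemma nash_cross_symm {N : ℕ} (c : ℝ) (A B : Set (EuclideanSpace ℝ (Fin N)))
    (v : EuclideanSpace ℝ (Fin N) → ℝ) (hv : Continuous v) :
    crossTerm c A B v = crossTerm c B A v := by
  unfold crossTerm
  rw [lintegral_lintegral_swap]
  · refine lintegral_congr fun x => lintegral_congr fun y => ?_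
    rw [norm_sub_rev, ← neg_sub (v x) (v y), neg_sq]
  · have := hv.measurable
    exact Measurable.aemeasurable (by fun_prop)

/-- Scalar asymptotics. -/
lemma nash_scalar (n α s ω W K C ε₀ : ℝ) (hn : 0 < n) (hα : 0 < α)
    (hω : 0 < ω) (hW : 0 < W) (hK : 0 ≤ K) (hC : 0 < C) (hε₀ : 0 < ε₀) (hs : 0 < s)
    (h : ∀ ε : ℝ, 0 < ε → ε < ε₀ → ε < 1 →
      (ε ^ n * ω) ^ (1 + 2 * α / n) ≤
        C * (ε ^ n * W) ^ (4 * α / n) * (ε ^ n * W + K * ε ^ (n - 2 * s))) : α ≤ s := by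
  by_contra hlt
  push Not at hlt
  have hc1 : 0 < ω ^ (1 + 2 * α / n) := by positivity
  have key : ∀ ε : ℝ, 0 < ε → ε < ε₀ → ε < 1 →
      ω ^ (1 + 2 * α / n) ≤ C * W ^ (4 * α / n) * (W + K) * ε ^ (2 * (α - s)) := by
    intro ε h0 h1 h2
    have h3 := h ε h0 h1 h2
    have h4 : ε ^ n ≤ ε ^ (n - 2 * s) :=
      Real.rpow_le_rpow_of_exponent_ge h0 h2.le (by linarith)
    rw [Real.mul_rpow (by positivity) hω.le, Real.mul_rpow (by positivity) hW.le,
      ← Real.rpow_mul h0.le, ← Real.rpow_mul h0.le] at h3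
    have e1 : n * (1 + 2 * α / n) = n + 2 * α := by field_simp
    have e2 : n * (4 * α / n) = 4 * α := by field_simp
    rw [e1, e2] at h3
    have h5 : ε ^ (n + 2 * α) * ω ^ (1 + 2 * α / n) ≤
        ε ^ (n + 2 * α) * (C * W ^ (4 * α / n) * (W + K) * ε ^ (2 * (α - s))) := by
      calc _ ≤ _ := h3
        _ ≤ C * (ε ^ (4 * α) * W ^ (4 * α / n)) *
            (ε ^ (n - 2 * s) * W + K * ε ^ (n - 2 * s)) := by gcongr
        _ = (ε ^ (4 * α) * ε ^ (n - 2 * s)) * (C * W ^ (4 * α / n) * (W + K)) := by ring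
        _ = (ε ^ (n + 2 * α) * ε ^ (2 * (α - s))) * (C * W ^ (4 * α / n) * (W + K)) := by
            rw [← Real.rpow_add h0, ← Real.rpow_add h0]; congr 2; ring
        _ = _ := by ring
    exact le_of_mul_le_mul_left h5 (by positivity)
  have ht : Filter.Tendsto (fun ε : ℝ => C * W ^ (4 * α / n) * (W + K) * ε ^ (2 * (α - s)))
      (nhdsWithin 0 (Set.Ioi 0)) (nhds 0) := by
    have h1 : Filter.Tendsto (fun ε : ℝ => ε ^ (2 * (α - s))) (nhds 0) (nhds 0) := by
      have := (Real.continuousAt_rpow_const 0 (2 * (α - s)) (Or.inr (by linarith))).tendsto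
      rwa [Real.zero_rpow (by linarith)] at this
    simpa using (h1.mono_left nhdsWithin_le_nhds).const_mul (C * W ^ (4 * α / n) * (W + K))
  have hge : ω ^ (1 + 2 * α / n) ≤ 0 := by
    refine ge_of_tendsto ht ?_
    filter_upwards [Ioo_mem_nhdsGT hε₀, Ioo_mem_nhdsGT one_pos] with ε h1 h2
    exact key ε h1.1 h1.2 h2.2
  linarith

/-- Existence of the rescaled test functions and the bounds that are needed. -/
lemma nash_test (N : ℕ) : ∃ M : ℝ, 0 < M ∧ ∀ (x₀ : EuclideanSpace ℝ (Fin N)) (ε : ℝ), 0 < ε →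
    ∃ v : EuclideanSpace ℝ (Fin N) → ℝ, ContDiff ℝ (⊤ : ℕ∞) v ∧ HasCompactSupport v ∧
      (∀ x, 0 ≤ v x) ∧ (∀ x, v x ≤ 1) ∧ (∀ x ∈ Metric.closedBall x₀ ε, v x = 1) ∧
      (∀ x, x ∉ Metric.closedBall x₀ (ε * 2) → v x = 0) ∧
      (∀ x y, (v x - v y) ^ 2 ≤ M * min 1 (‖ε⁻¹ • (x - y)‖ ^ 2)) := by
  let φ : ContDiffBump (0 : EuclideanSpace ℝ (Fin N)) := ⟨1, 2, one_pos, one_lt_two⟩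
  obtain ⟨L, hL⟩ := ContDiff.lipschitzWith_of_hasCompactSupport (𝕂 := ℝ) (n := 1)
    φ.hasCompactSupport φ.contDiff one_ne_zero
  refine ⟨1 + (L : ℝ) ^ 2, by positivity, fun x₀ ε hε => ?_⟩
  have hd : ∀ x, dist (ε⁻¹ • (x - x₀)) 0 = ε⁻¹ * dist x x₀ := by
    intro x
    rw [dist_zero_right, norm_smul, Real.norm_of_nonneg (by positivity), dist_eq_norm]
  have hz : ∀ x, x ∉ Metric.closedBall x₀ (ε * 2) → φ (ε⁻¹ • (x - x₀)) = 0 := by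
    intro x hx
    apply φ.zero_of_le_dist
    rw [hd]
    rw [Metric.mem_closedBall, not_le] at hx
    change (2 : ℝ) ≤ _
    rw [← div_eq_inv_mul, le_div_iff₀ hε]
    linarith
  refine ⟨fun x => φ (ε⁻¹ • (x - x₀)), ?_, ?_, fun x => φ.nonneg, fun x => φ.le_one, ?_, hz, ?_⟩
  · exact φ.contDiff.comp (by fun_prop)
  · exact HasCompactSupport.intro (isCompact_closedBall x₀ (ε * 2)) hz
  · intro x hx
    apply φ.one_of_mem_closedBall
    rw [Metric.mem_closedBall, hd]
    change _ ≤ (1 : ℝ)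
    rw [← div_eq_inv_mul, div_le_one hε]
    exact hx
  · intro x y
    have h1 : (φ (ε⁻¹ • (x - x₀)) - φ (ε⁻¹ • (y - x₀))) ^ 2 ≤ 1 := by
      have a1 := φ.nonneg (x := ε⁻¹ • (x - x₀))
      have a2 := φ.nonneg (x := ε⁻¹ • (y - x₀))
      have a3 := φ.le_one (x := ε⁻¹ • (x - x₀))
      have a4 := φ.le_one (x := ε⁻¹ • (y - x₀))
      nlinarith
    have h2 : (φ (ε⁻¹ • (x - x₀)) - φ (ε⁻¹ • (y - x₀))) ^ 2 ≤
        (L : ℝ) ^ 2 * ‖ε⁻¹ • (x - y)‖ ^ 2 := by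
      have := hL.dist_le_mul (ε⁻¹ • (x - x₀)) (ε⁻¹ • (y - x₀))
      rw [Real.dist_eq, dist_eq_norm, ← smul_sub, sub_sub_sub_cancel_right] at this
      rw [← sq_abs, ← mul_pow]
      gcongr
    have hnn : 0 ≤ (L : ℝ) ^ 2 := by positivity
    rcases le_total 1 (‖ε⁻¹ • (x - y)‖ ^ 2) with h | h
    · rw [min_eq_left h]; dsimp only; linarith
    · rw [min_eq_right h]; dsimp only
      nlinarith [sq_nonneg ‖ε⁻¹ • (x - y)‖]

lemma nash_half (N : ℕ) (hN : 1 ≤ N) (r s c : ℝ)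
    (hs : s ∈ Set.Ioo (0 : ℝ) 1) (hc : c ∈ Set.Ioo (0 : ℝ) 1)
    (αs αr αc : ℝ)
    (Ωs Ωr : Set (EuclideanSpace ℝ (Fin N))) (hnes : Ωs.Nonempty)
    (hΩs : IsOpen Ωs) (hΩr : IsOpen Ωr) (hdisj : Disjoint Ωs Ωr)
    (α : ℝ) (hα : 0 < α) (C : ℝ) (hC : 0 < C)
    (hineq : ∀ v : EuclideanSpace ℝ (Fin N) → ℝ, ContDiff ℝ (⊤ : ℕ∞) v → HasCompactSupport v →
      eLpNorm v 2 volume ^ (2 + 4 * α / (N : ℝ)) ≤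
        ENNReal.ofReal C * eLpNorm v 1 volume ^ (4 * α / (N : ℝ)) *
          (eLpNorm v 2 volume ^ (2 : ℝ) + energyQ r s c αs αr αc Ωs Ωr v)) :
    α ≤ s := by
  obtain ⟨x₀, hx₀⟩ := hnes
  obtain ⟨ρ, hρ, hball⟩ := Metric.isOpen_iff.1 hΩs x₀ hx₀
  obtain ⟨M, hM, htest⟩ := nash_test N
  set I := ∫⁻ z, nashKern N ((N : ℝ) + 2 * s) z with hI
  set J := ∫⁻ z, nashKern N ((N : ℝ) + 2 * c) z with hJ
  have hIfin : I ≠ ⊤ := nashKern_finite N hN s hs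
  have hJfin : J ≠ ⊤ := nashKern_finite N hN c hc
  set ω := volume (Metric.closedBall (0 : EuclideanSpace ℝ (Fin N)) 1) with hω
  set W := volume (Metric.closedBall (0 : EuclideanSpace ℝ (Fin N)) 2) with hW
  have hωfin : ω ≠ ⊤ := measure_closedBall_lt_top.ne
  have hWfin : W ≠ ⊤ := measure_closedBall_lt_top.ne
  have hωpos : ω ≠ 0 := (Metric.measure_closedBall_pos _ _ one_pos).ne'
  have hWpos : W ≠ 0 := (Metric.measure_closedBall_pos _ _ two_pos).ne'
  set d := min 1 (ρ / 2) with hd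
  have hd0 : 0 < d := by positivity
  have hd1 : d ≤ 1 := min_le_left _ _
  have hdρ : d ≤ ρ / 2 := min_le_right _ _
  set K : ℝ≥0∞ := ENNReal.ofReal (αs / 4) * (2 * W * (ENNReal.ofReal M * I)) +
    ENNReal.ofReal (αc / 2) * (2 * W * (ENNReal.ofReal (d ^ 2)⁻¹ * J)) with hK
  have hKfin : K ≠ ⊤ := by finiteness
  have hn : (0 : ℝ) < N := by exact_mod_cast hN
  refine nash_scalar N α s ω.toReal W.toReal K.toReal C (ρ / 4) hn hα
    (ENNReal.toReal_pos hωpos hωfin) (ENNReal.toReal_pos hWpos hWfin) ENNReal.toReal_nonneg hC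
    (by positivity) hs.1 ?_
  intro ε hε hερ hε1
  obtain ⟨v, hv1, hv2, hv0, hvle, hvone, hvz, hvd⟩ := htest x₀ ε hε
  have hmain := hineq v hv1 hv2
  set B := Metric.closedBall x₀ (ε * 2) with hB
  have hBm : MeasurableSet B := measurableSet_closedBall
  have hBvol : volume B = ENNReal.ofReal (ε ^ N) * W := by
    rw [hB, Measure.addHaar_closedBall_mul_of_pos volume x₀ hε 2]; simp [hW]
  have hB1vol : volume (Metric.closedBall x₀ ε) = ENNReal.ofReal (ε ^ N) * ω := by
    rw [Measure.addHaar_closedBall' volume x₀ hε.le]; simp [hω]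
  -- far points
  have hfar : ∀ x ∈ B, ∀ y ∈ Ωr, d ≤ ‖x - y‖ := by
    intro x hx y hy
    have hy' : ρ ≤ dist y x₀ := by
      by_contra hlt
      exact Set.disjoint_left.1 hdisj (hball (Metric.mem_ball.2 (not_le.1 hlt))) hy
    have hx' : dist x x₀ ≤ ε * 2 := hx
    have := dist_triangle y x x₀
    rw [← dist_eq_norm, dist_comm]
    linarith
  have hvr : ∀ y ∈ Ωr, v y = 0 := by
    intro y hy
    refine hvz y fun hyB => ?_
    have := hfar y hyB y hy
    simp at this
    linarith
  -- energy
  have hG1 : gagliardoSq s Ωs v ≤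
      ENNReal.ofReal (ε ^ ((N : ℝ) - 2 * s)) * (2 * W * (ENNReal.ofReal M * I)) := by
    have hgm : Measurable (fun z => ENNReal.ofReal (M * ε ^ (-((N : ℝ) + 2 * s))) *
        nashKern N ((N : ℝ) + 2 * s) (ε⁻¹ • z)) := by
      have := nashKern_measurable N ((N : ℝ) + 2 * s)
      fun_prop
    refine (nash_dbl Ωs Ωs B hΩs.measurableSet hΩs.measurableSet hBm _ _ hgm ?_).trans ?_
    · intro x _ y _
      by_cases hxy : x ∈ B ∨ y ∈ B
      · have h1 : (1 : ℝ≥0∞) ≤ B.indicator 1 x + B.indicator 1 y := by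
          rcases hxy with h | h
          · rw [Set.indicator_of_mem h]; exact le_self_add
          · rw [Set.indicator_of_mem h]; exact le_add_self
        refine le_trans ?_ (mul_le_mul_left h1 _)
        rw [one_mul, nashKern, ← ENNReal.ofReal_mul (by positivity)]
        refine ENNReal.ofReal_le_ofReal ?_
        have e1 : ‖x - y‖ ^ ((N : ℝ) + 2 * s) =
            ε ^ ((N : ℝ) + 2 * s) * ‖ε⁻¹ • (x - y)‖ ^ ((N : ℝ) + 2 * s) := by
          rw [← Real.mul_rpow hε.le (norm_nonneg _), norm_smul,
            Real.norm_of_nonneg (by positivity), mul_inv_cancel_left₀ hε.ne']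
        calc (v x - v y) ^ 2 / ‖x - y‖ ^ ((N : ℝ) + 2 * s)
            ≤ M * min 1 (‖ε⁻¹ • (x - y)‖ ^ 2) / ‖x - y‖ ^ ((N : ℝ) + 2 * s) := by
              gcongr; exact hvd x y
          _ = _ := by
              rw [e1, Real.rpow_neg hε.le]
              rw [mul_div_mul_comm, div_eq_mul_inv M]
      · push Not at hxy
        simp [hvz x hxy.1, hvz y hxy.2]
    · have hkm : Measurable (fun z : EuclideanSpace ℝ (Fin N) =>
          nashKern N ((N : ℝ) + 2 * s) (ε⁻¹ • z)) :=
        (nashKern_measurable N _).comp (measurable_const_smul _)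
      rw [lintegral_const_mul _ hkm,
        nashKern_scale N _ ε hε, hBvol, ← hI, ENNReal.ofReal_mul hM.le]
      have e2 : ε ^ ((N : ℝ) - 2 * s) = ε ^ N * (ε ^ (-((N : ℝ) + 2 * s)) * ε ^ N) := by
        rw [← Real.rpow_natCast, ← Real.rpow_add hε, ← Real.rpow_add hε]; congr 1; ring
      rw [e2, ENNReal.ofReal_mul (by positivity), ENNReal.ofReal_mul (by positivity)]
      apply le_of_eq; ring
  have hG2 : gagliardoSq r Ωr v = 0 := by
    unfold gagliardoSq
    have : ∀ x ∈ Ωr, ∫⁻ y in Ωr,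
        ENNReal.ofReal ((v x - v y) ^ 2 / ‖x - y‖ ^ ((N : ℝ) + 2 * r)) = 0 := by
      intro x hx
      rw [setLIntegral_congr_fun (g := fun _ => 0) hΩr.measurableSet]
      · simp
      · intro y hy
        simp [hvr x hx, hvr y hy]
    rw [setLIntegral_congr_fun (g := fun _ => 0) hΩr.measurableSet this]
    simp
  have hεle : ENNReal.ofReal (ε ^ N) ≤ ENNReal.ofReal (ε ^ ((N : ℝ) - 2 * s)) := by
    refine ENNReal.ofReal_le_ofReal ?_
    rw [← Real.rpow_natCast]
    exact Real.rpow_le_rpow_of_exponent_ge hε hε1.le (by linarith [hs.1])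
  have hX : crossTerm c Ωs Ωr v ≤
      ENNReal.ofReal (ε ^ ((N : ℝ) - 2 * s)) *
        (2 * W * (ENNReal.ofReal (d ^ 2)⁻¹ * J)) := by
    have hgm : Measurable (fun z => ENNReal.ofReal (d ^ 2)⁻¹ *
        nashKern N ((N : ℝ) + 2 * c) z) := by
      have := nashKern_measurable N ((N : ℝ) + 2 * c)
      fun_prop
    refine (nash_dbl Ωs Ωr B hΩs.measurableSet hΩr.measurableSet hBm _ _ hgm ?_).trans ?_
    · intro x _ y hy
      by_cases hx : x ∈ B
      · have h1 : (1 : ℝ≥0∞) ≤ B.indicator 1 x + B.indicator 1 y := by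
          rw [Set.indicator_of_mem hx]; exact le_self_add
        refine le_trans ?_ (mul_le_mul_left h1 _)
        rw [one_mul, nashKern, ← ENNReal.ofReal_mul (by positivity), ← mul_div_assoc]
        refine ENNReal.ofReal_le_ofReal ?_
        have h2 : (v x - v y) ^ 2 ≤ (d ^ 2)⁻¹ * min 1 (‖x - y‖ ^ 2) := by
          have h3 : (v x - v y) ^ 2 ≤ 1 := by
            rw [hvr y hy, sub_zero]; exact pow_le_one₀ (hv0 x) (hvle x)
          have h4 : d ^ 2 ≤ min 1 (‖x - y‖ ^ 2) := by
            refine le_min (pow_le_one₀ hd0.le hd1) ?_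
            have := hfar x hx y hy
            gcongr
          rw [← div_eq_inv_mul, le_div_iff₀ (by positivity)]
          nlinarith [sq_nonneg d]
        gcongr
      · simp [hvz x hx, hvr y hy]
    · rw [lintegral_const_mul _ (nashKern_measurable N _), hBvol, ← hJ]
      calc 2 * (ENNReal.ofReal (ε ^ N) * W) * (ENNReal.ofReal (d ^ 2)⁻¹ * J)
          = ENNReal.ofReal (ε ^ N) * (2 * W * (ENNReal.ofReal (d ^ 2)⁻¹ * J)) := by ring
        _ ≤ _ := by gcongr
  have hE : energyQ r s c αs αr αc Ωs Ωr v ≤ ENNReal.ofReal (ε ^ ((N : ℝ) - 2 * s)) * K := by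
    unfold energyQ
    rw [hG2, mul_zero, add_zero]
    calc _ ≤ ENNReal.ofReal (αs / 4) * (ENNReal.ofReal (ε ^ ((N : ℝ) - 2 * s)) *
            (2 * W * (ENNReal.ofReal M * I))) + ENNReal.ofReal (αc / 2) *
            (ENNReal.ofReal (ε ^ ((N : ℝ) - 2 * s)) *
              (2 * W * (ENNReal.ofReal (d ^ 2)⁻¹ * J))) := by gcongr
      _ = _ := by rw [hK]; ring
  -- norms
  have hv1' : ∀ x, ‖v x‖ₑ ≤ B.indicator 1 x := by
    intro x
    by_cases hx : x ∈ B
    · rw [Set.indicator_of_mem hx, Real.enorm_eq_ofReal (hv0 x)]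
      simpa using hvle x
    · simp [hvz x hx]
  have hL1 : eLpNorm v 1 volume ≤ ENNReal.ofReal (ε ^ N) * W := by
    rw [eLpNorm_one_eq_lintegral_enorm, ← hBvol, ← lintegral_indicator_one hBm]
    exact lintegral_mono hv1'
  have hL2eq : eLpNorm v 2 volume ^ (2 : ℝ) = ∫⁻ x, ‖v x‖ₑ ^ (2 : ℝ) := by
    have := eLpNorm_nnreal_pow_eq_lintegral (μ := volume) (f := v) (p := 2) two_ne_zero
    simpa using this
  have hL2u : eLpNorm v 2 volume ^ (2 : ℝ) ≤ ENNReal.ofReal (ε ^ N) * W := by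
    rw [hL2eq, ← hBvol, ← lintegral_indicator_one hBm]
    refine lintegral_mono fun x => ?_
    by_cases hx : x ∈ B
    · have := hv1' x
      rw [Set.indicator_of_mem hx] at this ⊢
      exact ENNReal.rpow_le_one this (by norm_num)
    · simp [hvz x hx]
  have hL2l : ENNReal.ofReal (ε ^ N) * ω ≤ eLpNorm v 2 volume ^ (2 : ℝ) := by
    rw [hL2eq, ← hB1vol, ← lintegral_indicator_one measurableSet_closedBall]
    refine lintegral_mono fun x => ?_
    by_cases hx : x ∈ Metric.closedBall x₀ ε
    · simp [Set.indicator_of_mem hx, hvone x hx]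
    · simp [Set.indicator_of_notMem hx]
  have hfinal : (ENNReal.ofReal (ε ^ N) * ω) ^ (1 + 2 * α / (N : ℝ)) ≤
      ENNReal.ofReal C * (ENNReal.ofReal (ε ^ N) * W) ^ (4 * α / (N : ℝ)) *
        (ENNReal.ofReal (ε ^ N) * W + ENNReal.ofReal (ε ^ ((N : ℝ) - 2 * s)) * K) := by
    calc (ENNReal.ofReal (ε ^ N) * ω) ^ (1 + 2 * α / (N : ℝ))
        ≤ (eLpNorm v 2 volume ^ (2 : ℝ)) ^ (1 + 2 * α / (N : ℝ)) := by
          gcongr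
      _ = eLpNorm v 2 volume ^ (2 + 4 * α / (N : ℝ)) := by
          rw [← ENNReal.rpow_mul]; congr 1; ring
      _ ≤ _ := hmain
      _ ≤ _ := by gcongr
  have htop : ENNReal.ofReal C * (ENNReal.ofReal (ε ^ N) * W) ^ (4 * α / (N : ℝ)) *
        (ENNReal.ofReal (ε ^ N) * W + ENNReal.ofReal (ε ^ ((N : ℝ) - 2 * s)) * K) ≠ ⊤ := by
    have : (0 : ℝ) ≤ 4 * α / (N : ℝ) := by positivity
    have h2 : (ENNReal.ofReal (ε ^ N) * W) ^ (4 * α / (N : ℝ)) ≠ ⊤ :=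
      ENNReal.rpow_ne_top_of_nonneg this (by finiteness)
    finiteness
  have hreal := ENNReal.toReal_mono htop hfinal
  rw [ENNReal.toReal_mul, ENNReal.toReal_mul, ENNReal.toReal_add (by finiteness) (by finiteness),
    ← ENNReal.toReal_rpow, ← ENNReal.toReal_rpow, ENNReal.toReal_mul, ENNReal.toReal_mul,
    ENNReal.toReal_mul, ENNReal.toReal_ofReal (by positivity), ENNReal.toReal_ofReal hC.le,
    ENNReal.toReal_ofReal (by positivity)] at hreal
  rw [Real.rpow_natCast, mul_comm K.toReal]
  exact hreal

/-- Any exponent `α` for which the Nash-type inequality with the coupled energy holds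
must satisfy `α ≤ min{r,s}`. -/
theorem nash_exponent_upper_bound (N : ℕ) (hN : 1 ≤ N) (r s c : ℝ)
    (hr : r ∈ Set.Ioo (0 : ℝ) 1) (hs : s ∈ Set.Ioo (0 : ℝ) 1) (hc : c ∈ Set.Ioo (0 : ℝ) 1)
    (αs αr αc : ℝ) (hαs : 0 < αs) (hαr : 0 < αr) (hαc : 0 < αc)
    (Ωs Ωr : Set (EuclideanSpace ℝ (Fin N))) (hnes : Ωs.Nonempty) (hner : Ωr.Nonempty)
    (hΩs : IsOpen Ωs) (hΩr : IsOpen Ωr) (hdisj : Disjoint Ωs Ωr)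
    (α : ℝ) (hα : 0 < α) (C : ℝ) (hC : 0 < C)
    (hineq : ∀ v : EuclideanSpace ℝ (Fin N) → ℝ, ContDiff ℝ (⊤ : ℕ∞) v → HasCompactSupport v →
      eLpNorm v 2 volume ^ (2 + 4 * α / (N : ℝ)) ≤
        ENNReal.ofReal C * eLpNorm v 1 volume ^ (4 * α / (N : ℝ)) *
          (eLpNorm v 2 volume ^ (2 : ℝ) + energyQ r s c αs αr αc Ωs Ωr v)) :
    α ≤ min r s := by
  refine le_min ?_ ?_
  · refine nash_half N hN s r c hr hc αr αs αc Ωr Ωs hner hΩr hΩs hdisj.symm α hα C hC ?_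
    intro v h1 h2
    have h3 : energyQ s r c αr αs αc Ωr Ωs v = energyQ r s c αs αr αc Ωs Ωr v := by
      unfold energyQ
      rw [nash_cross_symm c Ωr Ωs v h1.continuous]
      ring
    rw [h3]
    exact hineq v h1 h2
  · exact nash_half N hN r s c hs hc αs αr αc Ωs Ωr hnes hΩs hΩr hdisj α hα C hC hineq
end

section
/- Let N ≥ 1, r, s, c ∈ (0,1), α_s, α_r, α_c > 0. Let Ω_s ⊂ ℝ^N be a bounded nonempty open set and Ω_r = ℝ^N ∖ closure(Ω_s). Suppose α > 0, k > 0 and there exists C > 0 such that for every v ∈ C_c^∞(ℝ^N) with ‖v‖_{L²(ℝ^N)} ≤ k ‖v‖_{L¹(ℝ^N)}, one has ‖v‖_{L²(ℝ^N)}^{2 + 4α/N} ≤ C ‖v‖_{L¹(ℝ^N)}^{4α/N} Q(v). Then α ≥ r. -/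
open MeasureTheory ENNReal

open Set in
/-- Integrability of the truncated kernel. -/
lemma nash_kernel_integrable {N : ℕ} (hN : 1 ≤ N) {r : ℝ} (hr : r ∈ Set.Ioo (0 : ℝ) 1) :
    Integrable (fun h : EuclideanSpace ℝ (Fin N) =>
      min (‖h‖ ^ 2) 1 / ‖h‖ ^ ((N : ℝ) + 2 * r)) volume := by
  have : Nonempty (Fin N) := ⟨⟨0, hN⟩⟩
  have : Nontrivial (EuclideanSpace ℝ (Fin N)) := inferInstance
  have key := integrable_fun_norm_addHaar (volume : Measure (EuclideanSpace ℝ (Fin N)))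
    (f := fun t : ℝ => min (t ^ 2) 1 / t ^ ((N : ℝ) + 2 * r))
  refine key.2 ?_
  rw [finrank_euclideanSpace_fin]
  have e : ∀ t : ℝ, 0 < t → t ^ (N - 1) • (min (t ^ 2) 1 / t ^ ((N : ℝ) + 2 * r))
      = min (t ^ 2) 1 * t ^ (-1 - 2 * r) := by
    intro t ht
    have h1 : t ^ (N - 1) = t ^ ((N : ℝ) - 1) := by
      rw [← Real.rpow_natCast, Nat.cast_sub hN]; simp
    have h2 : t ^ (-1 - 2 * r) = t ^ ((N : ℝ) - 1) / t ^ ((N : ℝ) + 2 * r) := by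
      rw [← Real.rpow_sub ht]; ring_nf
    rw [smul_eq_mul, h1, h2]; ring
  rw [← Ioc_union_Ioi_eq_Ioi (zero_le_one' ℝ)]
  refine IntegrableOn.union ?_ ?_
  · have h0 : IntegrableOn (fun t : ℝ => t ^ (1 - 2 * r)) (Ioc 0 1) := by
      have := (intervalIntegral.intervalIntegrable_rpow' (a := 0) (b := 1)
        (r := 1 - 2 * r) (by linarith [hr.2]))
      rwa [intervalIntegrable_iff_integrableOn_Ioc_of_le zero_le_one] at this
    refine h0.congr_fun ?_ measurableSet_Ioc
    intro t ht
    beta_reduce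
    rw [e t ht.1, min_eq_left (by nlinarith [ht.1, ht.2]), ← Real.rpow_natCast,
      ← Real.rpow_add ht.1]
    congr 1; push_cast; ring
  · have h0 : IntegrableOn (fun t : ℝ => t ^ (-1 - 2 * r)) (Ioi 1) :=
      integrableOn_Ioi_rpow_of_lt (by linarith [hr.1]) one_pos
    refine h0.congr_fun ?_ measurableSet_Ioi
    intro t ht
    have ht : (1 : ℝ) < t := ht
    beta_reduce
    rw [e t (by linarith), min_eq_right (by nlinarith), one_mul]

/-- Gagliardo seminorm of a bump is finite. -/
lemma nash_gagliardo_finite {N : ℕ} (hN : 1 ≤ N) {r : ℝ} (hr : r ∈ Set.Ioo (0 : ℝ) 1)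
    (φ : ContDiffBump (0 : EuclideanSpace ℝ (Fin N))) :
    gagliardoSq r Set.univ (φ : EuclideanSpace ℝ (Fin N) → ℝ) < ⊤ := by
  obtain ⟨L, hL⟩ := ContDiff.lipschitzWith_of_hasCompactSupport (𝕂 := ℝ) (n := 1)
    φ.hasCompactSupport φ.contDiff (by simp)
  set K : EuclideanSpace ℝ (Fin N) → ℝ≥0∞ := fun h =>
    ENNReal.ofReal (((L : ℝ) ^ 2 + 1) * (min (‖h‖ ^ 2) 1 / ‖h‖ ^ ((N : ℝ) + 2 * r))) with hK
  have hKm : Measurable K := by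
    rw [hK]; fun_prop
  have hKfin : ∫⁻ h, K h < ⊤ := by
    have := ((nash_kernel_integrable hN hr).const_mul ((L : ℝ) ^ 2 + 1)).lintegral_lt_top
    exact this
  set B := Metric.ball (0 : EuclideanSpace ℝ (Fin N)) φ.rOut with hB
  have hBm : MeasurableSet B := measurableSet_ball
  have hz : ∀ x, x ∉ B → φ x = 0 := fun x hx => φ.zero_of_le_dist (by simpa [hB] using hx)
  have hpt : ∀ x y, ENNReal.ofReal ((φ x - φ y) ^ 2 / ‖x - y‖ ^ ((N : ℝ) + 2 * r)) ≤
      B.indicator 1 x * K (x - y) + B.indicator 1 y * K (x - y) := by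
    intro x y
    have h1 : (φ x - φ y) ^ 2 / ‖x - y‖ ^ ((N : ℝ) + 2 * r) ≤
        ((L : ℝ) ^ 2 + 1) * (min (‖x - y‖ ^ 2) 1 / ‖x - y‖ ^ ((N : ℝ) + 2 * r)) := by
      rw [← mul_div_assoc]
      gcongr
      have a1 : (φ x - φ y) ^ 2 ≤ 1 := by
        have := φ.nonneg' x; have := φ.nonneg' y
        have := φ.le_one (x := x); have := φ.le_one (x := y)
        rw [sq_le_one_iff_abs_le_one, abs_le]; constructor <;> linarith
      have a2 : (φ x - φ y) ^ 2 ≤ (L : ℝ) ^ 2 * ‖x - y‖ ^ 2 := by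
        have := hL.dist_le_mul x y
        rw [Real.dist_eq, dist_eq_norm] at this
        rw [← mul_pow, ← sq_abs]
        gcongr
      rcases min_cases (‖x - y‖ ^ 2) 1 with ⟨h, _⟩ | ⟨h, _⟩ <;> rw [h]
      · nlinarith [sq_nonneg ‖x - y‖]
      · nlinarith [sq_nonneg (L : ℝ)]
    by_cases hx : x ∈ B
    · calc _ ≤ K (x - y) := ENNReal.ofReal_le_ofReal h1
        _ ≤ _ := by simp [hx]
    · by_cases hy : y ∈ B
      · calc _ ≤ K (x - y) := ENNReal.ofReal_le_ofReal h1
          _ ≤ _ := by simp [hy]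
      · simp [hz x hx, hz y hy]
  have hI : Measurable (B.indicator (1 : EuclideanSpace ℝ (Fin N) → ℝ≥0∞)) :=
    measurable_one.indicator hBm
  have hm1 : Measurable (fun p : EuclideanSpace ℝ (Fin N) × EuclideanSpace ℝ (Fin N) =>
      B.indicator (1 : EuclideanSpace ℝ (Fin N) → ℝ≥0∞) p.1 * K (p.1 - p.2)) := by fun_prop
  have hm2 : Measurable (fun p : EuclideanSpace ℝ (Fin N) × EuclideanSpace ℝ (Fin N) =>
      B.indicator (1 : EuclideanSpace ℝ (Fin N) → ℝ≥0∞) p.2 * K (p.1 - p.2)) := by fun_prop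
  have hvol : volume B * ∫⁻ h, K h < ⊤ := ENNReal.mul_lt_top measure_ball_lt_top hKfin
  have i1 : ∫⁻ x, ∫⁻ y, B.indicator 1 x * K (x - y) = volume B * ∫⁻ h, K h := by
    have : ∀ x, ∫⁻ y, B.indicator 1 x * K (x - y) = B.indicator 1 x * ∫⁻ h, K h := by
      intro x
      rw [lintegral_const_mul _ (by fun_prop), lintegral_sub_left_eq_self K x]
    simp_rw [this]
    rw [lintegral_mul_const _ hI, lintegral_indicator_one hBm]
  have i2 : ∫⁻ x, ∫⁻ y, B.indicator 1 y * K (x - y) = volume B * ∫⁻ h, K h := by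
    rw [lintegral_lintegral_swap hm2.aemeasurable]
    have : ∀ y, ∫⁻ x, B.indicator 1 y * K (x - y) = B.indicator 1 y * ∫⁻ h, K h := by
      intro y
      rw [lintegral_const_mul _ (by fun_prop), lintegral_sub_right_eq_self K y]
    simp_rw [this]
    rw [lintegral_mul_const _ hI, lintegral_indicator_one hBm]
  unfold gagliardoSq
  simp only [Measure.restrict_univ]
  calc _ ≤ ∫⁻ x, ∫⁻ y, (B.indicator 1 x * K (x - y) + B.indicator 1 y * K (x - y)) :=
        lintegral_mono fun x => lintegral_mono fun y => hpt x y
    _ = ∫⁻ x, ((∫⁻ y, B.indicator 1 x * K (x - y)) + ∫⁻ y, B.indicator 1 y * K (x - y)) := by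
        refine lintegral_congr fun x => ?_
        rw [lintegral_add_left (by fun_prop)]
    _ = volume B * (∫⁻ h, K h) + volume B * ∫⁻ h, K h := by
        rw [lintegral_add_left hm1.lintegral_prod_right', i1, i2]
    _ < ⊤ := ENNReal.add_lt_top.2 ⟨hvol, hvol⟩

/-- Change of variables. -/
lemma nash_lintegral_scale {N : ℕ} (f : EuclideanSpace ℝ (Fin N) → ℝ≥0∞)
    (a : EuclideanSpace ℝ (Fin N)) {t : ℝ} (ht : 0 < t) :
    ∫⁻ x, f (t⁻¹ • (x - a)) = ENNReal.ofReal (t ^ N) * ∫⁻ x, f x := by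
  rw [lintegral_sub_right_eq_self (fun x => f (t⁻¹ • x)) a]
  have hm : MeasurableEmbedding (fun x : EuclideanSpace ℝ (Fin N) => t⁻¹ • x) :=
    (Homeomorph.smulOfNeZero t⁻¹ (inv_pos.2 ht).ne').measurableEmbedding
  rw [← hm.lintegral_map, Measure.map_addHaar_smul _ (inv_pos.2 ht).ne', lintegral_smul_measure,
    finrank_euclideanSpace_fin, smul_eq_mul, inv_pow, inv_inv, abs_of_pos (by positivity)]

/-- Scaling of the Gagliardo seminorm. -/
lemma nash_gagliardo_scale {N : ℕ} (r : ℝ) (φ : EuclideanSpace ℝ (Fin N) → ℝ)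
    (a : EuclideanSpace ℝ (Fin N)) {t : ℝ} (ht : 0 < t) :
    gagliardoSq r Set.univ (fun x => φ (t⁻¹ • (x - a))) =
      ENNReal.ofReal (t ^ ((N : ℝ) - 2 * r)) * gagliardoSq r Set.univ φ := by
  unfold gagliardoSq
  simp only [Measure.restrict_univ]
  set G : EuclideanSpace ℝ (Fin N) → EuclideanSpace ℝ (Fin N) → ℝ≥0∞ := fun x y =>
    ENNReal.ofReal ((φ x - φ y) ^ 2 / ‖x - y‖ ^ ((N : ℝ) + 2 * r)) with hG
  have e : ∀ x y, ENNReal.ofReal ((φ (t⁻¹ • (x - a)) - φ (t⁻¹ • (y - a))) ^ 2 /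
      ‖x - y‖ ^ ((N : ℝ) + 2 * r)) = ENNReal.ofReal (t ^ (-((N : ℝ) + 2 * r))) *
        G (t⁻¹ • (x - a)) (t⁻¹ • (y - a)) := by
    intro x y
    rw [hG]
    dsimp only
    rw [← ENNReal.ofReal_mul (by positivity)]
    congr 1
    have : ‖t⁻¹ • (x - a) - t⁻¹ • (y - a)‖ = t⁻¹ * ‖x - y‖ := by
      rw [← smul_sub, norm_smul, sub_sub_sub_cancel_right, Real.norm_of_nonneg (by positivity)]
    rw [this, Real.mul_rpow (by positivity) (by positivity), Real.rpow_neg ht.le,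
      Real.inv_rpow ht.le]
    have : 0 < t ^ ((N : ℝ) + 2 * r) := by positivity
    rw [mul_div_assoc', mul_div_mul_left _ _ (by positivity)]
  simp_rw [e]
  simp_rw [lintegral_const_mul' _ _ ENNReal.ofReal_ne_top]
  have e2 : ∀ x, ∫⁻ y, G (t⁻¹ • (x - a)) (t⁻¹ • (y - a)) =
      ENNReal.ofReal (t ^ N) * ∫⁻ y, G (t⁻¹ • (x - a)) y :=
    fun x => nash_lintegral_scale (fun y => G (t⁻¹ • (x - a)) y) a ht
  simp_rw [e2]
  rw [lintegral_const_mul' _ _ ENNReal.ofReal_ne_top,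
    nash_lintegral_scale (fun x => ∫⁻ y, G x y) a ht, ← mul_assoc, ← mul_assoc,
    ← ENNReal.ofReal_mul (by positivity), ← ENNReal.ofReal_mul (by positivity)]
  congr 2
  rw [← Real.rpow_natCast, ← Real.rpow_add ht, ← Real.rpow_add ht]
  congr 1; ring

lemma nash_eLpNorm_two_sq {N : ℕ} (v : EuclideanSpace ℝ (Fin N) → ℝ) :
    eLpNorm v 2 volume ^ 2 = ∫⁻ x, ENNReal.ofReal (v x ^ 2) := by
  have := eLpNorm_nnreal_pow_eq_lintegral (μ := (volume : Measure (EuclideanSpace ℝ (Fin N))))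
    (f := v) (p := 2) (by simp)
  simp only [NNReal.coe_ofNat, ENNReal.coe_ofNat, ENNReal.rpow_ofNat] at this
  rw [this]
  refine lintegral_congr fun x => ?_
  rw [← sq_abs, ENNReal.ofReal_pow (abs_nonneg _), Real.enorm_eq_ofReal_abs]

lemma nash_eLpNorm_one_scale {N : ℕ} (φ : EuclideanSpace ℝ (Fin N) → ℝ)
    (a : EuclideanSpace ℝ (Fin N)) {t : ℝ} (ht : 0 < t) :
    eLpNorm (fun x => φ (t⁻¹ • (x - a))) 1 volume =
      ENNReal.ofReal (t ^ (N : ℝ)) * eLpNorm φ 1 volume := by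
  rw [eLpNorm_one_eq_lintegral_enorm, eLpNorm_one_eq_lintegral_enorm, Real.rpow_natCast]
  exact nash_lintegral_scale (fun x => ‖φ x‖ₑ) a ht

lemma nash_eLpNorm_two_scale {N : ℕ} (φ : EuclideanSpace ℝ (Fin N) → ℝ)
    (a : EuclideanSpace ℝ (Fin N)) {t : ℝ} (ht : 0 < t) :
    eLpNorm (fun x => φ (t⁻¹ • (x - a))) 2 volume =
      ENNReal.ofReal (t ^ ((N : ℝ) / 2)) * eLpNorm φ 2 volume := by
  have h : eLpNorm (fun x => φ (t⁻¹ • (x - a))) 2 volume ^ 2 =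
      (ENNReal.ofReal (t ^ ((N : ℝ) / 2)) * eLpNorm φ 2 volume) ^ 2 := by
    rw [mul_pow, nash_eLpNorm_two_sq, nash_eLpNorm_two_sq,
      nash_lintegral_scale (fun x => ENNReal.ofReal (φ x ^ 2)) a ht,
      ← ENNReal.ofReal_pow (by positivity), ← Real.rpow_natCast (t ^ ((N : ℝ) / 2)),
      ← Real.rpow_mul ht.le, ← Real.rpow_natCast t]
    congr 3; push_cast; ring
  exact (ENNReal.pow_right_strictMono two_ne_zero).injective h

/-- Cross term for a function vanishing on `Ωs` and at distance `M` from it. -/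
lemma nash_cross_le {N : ℕ} {c : ℝ} (hc : 0 < c) (Ωs Ωr : Set (EuclideanSpace ℝ (Fin N)))
    (hm : MeasurableSet Ωs)
    (v : EuclideanSpace ℝ (Fin N) → ℝ) {M : ℝ} (hM : 0 < M) (h0 : ∀ x ∈ Ωs, v x = 0)
    (hd : ∀ x ∈ Ωs, ∀ y, v y ≠ 0 → M ≤ ‖x - y‖) :
    crossTerm c Ωs Ωr v ≤
      ENNReal.ofReal (M ^ (-((N : ℝ) + 2 * c))) * eLpNorm v 2 volume ^ 2 * volume Ωs := by
  unfold crossTerm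
  rw [← setLIntegral_const]
  refine setLIntegral_mono' hm fun x hx => ?_
  rw [nash_eLpNorm_two_sq, ← lintegral_const_mul' _ _ ENNReal.ofReal_ne_top]
  refine (setLIntegral_le_lintegral _ _).trans (lintegral_mono fun y => ?_)
  rw [← ENNReal.ofReal_mul (by positivity), h0 x hx]
  refine ENNReal.ofReal_le_ofReal ?_
  by_cases hy : v y = 0
  · simp [hy]
  · have := hd x hx y hy
    rw [zero_sub, neg_sq, Real.rpow_neg hM.le, inv_mul_eq_div]
    gcongr

/-- Any exponent `α` for which the normalized Nash-type inequality with the coupled energy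
holds must satisfy `α ≥ r`. -/
theorem nash_exponent_lower_bound (N : ℕ) (hN : 1 ≤ N) (r s c : ℝ)
    (hr : r ∈ Set.Ioo (0 : ℝ) 1) (hs : s ∈ Set.Ioo (0 : ℝ) 1) (hc : c ∈ Set.Ioo (0 : ℝ) 1)
    (αs αr αc : ℝ) (hαs : 0 < αs) (hαr : 0 < αr) (hαc : 0 < αc)
    (Ωs Ωr : Set (EuclideanSpace ℝ (Fin N))) (hnes : Ωs.Nonempty)
    (hΩs : IsOpen Ωs) (hbdd : Bornology.IsBounded Ωs) (hΩr : Ωr = (closure Ωs)ᶜ)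
    (α : ℝ) (hα : 0 < α) (k : ℝ) (hk : 0 < k) (C : ℝ) (hC : 0 < C)
    (hineq : ∀ v : EuclideanSpace ℝ (Fin N) → ℝ, ContDiff ℝ (⊤ : ℕ∞) v → HasCompactSupport v →
      eLpNorm v 2 volume ≤ ENNReal.ofReal k * eLpNorm v 1 volume →
      eLpNorm v 2 volume ^ (2 + 4 * α / (N : ℝ)) ≤
        ENNReal.ofReal C * eLpNorm v 1 volume ^ (4 * α / (N : ℝ)) *
          energyQ r s c αs αr αc Ωs Ωr v) :
    r ≤ α := by
  by_contra! hlt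
  have : Nonempty (Fin N) := ⟨⟨0, hN⟩⟩
  have hN0 : (0 : ℝ) < N := by exact_mod_cast hN
  have hN1 : (1 : ℝ) ≤ N := by exact_mod_cast hN
  obtain ⟨φ⟩ : Nonempty {φ : ContDiffBump (0 : EuclideanSpace ℝ (Fin N)) // φ.rOut = 2} :=
    ⟨⟨⟨1, 2, one_pos, one_lt_two⟩, rfl⟩⟩
  obtain ⟨φ, hφ⟩ := φ
  have hfin : ∀ p : ℝ≥0∞, eLpNorm φ p volume ≠ ⊤ := fun p =>
    (φ.continuous.memLp_of_hasCompactSupport (p := p) φ.hasCompactSupport).eLpNorm_ne_top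
  have hne : ∀ p : ℝ≥0∞, p ≠ 0 → eLpNorm φ p volume ≠ 0 := by
    intro p hp h
    rw [eLpNorm_eq_zero_iff φ.continuous.aestronglyMeasurable hp] at h
    have h' := (Continuous.ae_eq_iff_eq volume φ.continuous continuous_zero).1 h
    have h1 : φ 0 = 0 := congrFun h' 0
    have h2 : 0 < φ 0 := φ.pos_of_mem_ball (by simp [φ.rOut_pos])
    linarith
  obtain ⟨A, hA, hA2⟩ : ∃ A : ℝ, 0 < A ∧ eLpNorm φ 2 volume = ENNReal.ofReal A :=
    ⟨_, ENNReal.toReal_pos (hne 2 (by simp)) (hfin 2), (ENNReal.ofReal_toReal (hfin 2)).symm⟩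
  obtain ⟨B, hB, hB2⟩ : ∃ B : ℝ, 0 < B ∧ eLpNorm φ 1 volume = ENNReal.ofReal B :=
    ⟨_, ENNReal.toReal_pos (hne 1 (by simp)) (hfin 1), (ENNReal.ofReal_toReal (hfin 1)).symm⟩
  have hG := nash_gagliardo_finite hN hr φ
  obtain ⟨G, hG0, hG2⟩ : ∃ G : ℝ, 0 ≤ G ∧ gagliardoSq r Set.univ φ = ENNReal.ofReal G :=
    ⟨_, ENNReal.toReal_nonneg, (ENNReal.ofReal_toReal hG.ne).symm⟩
  obtain ⟨V, hV0, hV2⟩ : ∃ V : ℝ, 0 ≤ V ∧ volume Ωs = ENNReal.ofReal V :=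
    ⟨_, ENNReal.toReal_nonneg, (ENNReal.ofReal_toReal hbdd.measure_lt_top.ne).symm⟩
  obtain ⟨R, hR0, hR⟩ := hbdd.exists_pos_norm_le
  set K : ℝ := αr / 4 * G + αc / 2 * (A ^ 2 * V) with hK
  have hK0 : 0 ≤ K := by positivity
  -- the main estimate at scale t
  have main : ∀ t : ℝ, 1 ≤ t → A / (k * B) ≤ t ^ ((N : ℝ) / 2) →
      A ^ (2 + 4 * α / (N : ℝ)) * t ^ (2 * r - 2 * α) ≤ C * B ^ (4 * α / (N : ℝ)) * K := by
    intro t ht1 htk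
    have ht : 0 < t := by linarith
    obtain ⟨a, ha⟩ := exists_norm_eq (EuclideanSpace ℝ (Fin N))
      (c := R + 2 * t + t ^ 2) (by positivity)
    set v : EuclideanSpace ℝ (Fin N) → ℝ := fun x => φ (t⁻¹ • (x - a)) with hv
    have hvsupp : ∀ y, v y ≠ 0 → ‖y - a‖ < 2 * t := by
      intro y hy
      by_contra! hcon
      apply hy
      apply φ.zero_of_le_dist
      rw [hφ, dist_zero_right, norm_smul, Real.norm_of_nonneg (by positivity),
        inv_mul_eq_div, le_div_iff₀ ht]
      exact hcon
    have hd : ∀ x ∈ Ωs, ∀ y, v y ≠ 0 → t ^ 2 ≤ ‖x - y‖ := by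
      intro x hx y hy
      have h1 := hvsupp y hy
      have h2 := hR x hx
      have h3 : ‖a‖ ≤ ‖x‖ + ‖x - y‖ + ‖y - a‖ := by
        have : a = x - (x - y) - (y - a) := by abel
        calc ‖a‖ = ‖x - (x - y) - (y - a)‖ := by rw [← this]
          _ ≤ ‖x - (x - y)‖ + ‖y - a‖ := norm_sub_le _ _
          _ ≤ _ := by gcongr; exact norm_sub_le _ _
      linarith
    have h0 : ∀ x ∈ Ωs, v x = 0 := by
      intro x hx
      by_contra hcon
      have := hd x hx x hcon
      rw [sub_self, norm_zero] at this
      nlinarith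
    have hsm : ContDiff ℝ (⊤ : ℕ∞) v := by
      have : ContDiff ℝ (⊤ : ℕ∞) φ := φ.contDiff
      exact this.comp (by fun_prop)
    have hcs : HasCompactSupport v := by
      refine HasCompactSupport.intro (isCompact_closedBall a (2 * t)) fun x hx => ?_
      by_contra hcon
      have := hvsupp x hcon
      rw [Metric.mem_closedBall, dist_eq_norm] at hx
      linarith
    have n2 : eLpNorm v 2 volume = ENNReal.ofReal (t ^ ((N : ℝ) / 2) * A) := by
      rw [hv, nash_eLpNorm_two_scale _ a ht, hA2, ENNReal.ofReal_mul (by positivity)]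
    have n1 : eLpNorm v 1 volume = ENNReal.ofReal (t ^ (N : ℝ) * B) := by
      rw [hv, nash_eLpNorm_one_scale _ a ht, hB2, ENNReal.ofReal_mul (by positivity)]
    have hNN : t ^ (N : ℝ) = t ^ ((N : ℝ) / 2) * t ^ ((N : ℝ) / 2) := by
      rw [← Real.rpow_add ht]; ring_nf
    have hcond : eLpNorm v 2 volume ≤ ENNReal.ofReal k * eLpNorm v 1 volume := by
      rw [n2, n1, ← ENNReal.ofReal_mul hk.le]
      apply ENNReal.ofReal_le_ofReal
      rw [div_le_iff₀ (by positivity)] at htk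
      rw [hNN]
      have : 0 < t ^ ((N : ℝ) / 2) := by positivity
      nlinarith
    have hQ : energyQ r s c αs αr αc Ωs Ωr v ≤ ENNReal.ofReal (K * t ^ ((N : ℝ) - 2 * r)) := by
      have q1 : gagliardoSq s Ωs v = 0 := by
        unfold gagliardoSq
        rw [setLIntegral_congr_fun (g := fun _ => 0) hΩs.measurableSet]
        · simp
        · intro x hx
          show ∫⁻ y in Ωs, _ = 0
          rw [setLIntegral_congr_fun (g := fun _ => 0) hΩs.measurableSet]
          · simp
          · intro y hy
            simp [h0 x hx, h0 y hy]
      have q2 : gagliardoSq r Ωr v ≤ ENNReal.ofReal (t ^ ((N : ℝ) - 2 * r) * G) := by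
        rw [ENNReal.ofReal_mul (by positivity), ← hG2, ← nash_gagliardo_scale r φ a ht]
        unfold gagliardoSq
        simp only [Measure.restrict_univ]
        exact (setLIntegral_le_lintegral _ _).trans
          (lintegral_mono fun x => setLIntegral_le_lintegral _ _)
      have q3 : crossTerm c Ωs Ωr v ≤ ENNReal.ofReal (t ^ ((N : ℝ) - 2 * r) * (A ^ 2 * V)) := by
        refine (nash_cross_le hc.1 Ωs Ωr hΩs.measurableSet v (by positivity) h0 hd).trans ?_
        rw [n2, hV2, ← ENNReal.ofReal_pow (by positivity), ← ENNReal.ofReal_mul (by positivity),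
          ← ENNReal.ofReal_mul (by positivity)]
        apply ENNReal.ofReal_le_ofReal
        have e1 : (t ^ 2) ^ (-((N : ℝ) + 2 * c)) ≤ t ^ (-(2 * r)) := by
          rw [← Real.rpow_natCast, ← Real.rpow_mul ht.le]
          apply Real.rpow_le_rpow_of_exponent_le ht1
          push_cast
          linarith [hr.2, hc.1]
        have e2 : t ^ ((N : ℝ) - 2 * r) = t ^ (-(2 * r)) * t ^ (N : ℝ) := by
          rw [← Real.rpow_add ht]; ring_nf
        rw [e2, hNN]
        calc _ ≤ t ^ (-(2 * r)) * (t ^ ((N : ℝ) / 2) * A) ^ 2 * V := by gcongr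
          _ = _ := by ring
      unfold energyQ
      rw [q1, mul_zero, zero_add]
      calc _ ≤ ENNReal.ofReal (αr / 4) * ENNReal.ofReal (t ^ ((N : ℝ) - 2 * r) * G) +
            ENNReal.ofReal (αc / 2) * ENNReal.ofReal (t ^ ((N : ℝ) - 2 * r) * (A ^ 2 * V)) := by
              gcongr
        _ = _ := by
          rw [← ENNReal.ofReal_mul (by positivity), ← ENNReal.ofReal_mul (by positivity),
            ← ENNReal.ofReal_add (by positivity) (by positivity), hK]
          congr 1; ring
    have hfinal := (hineq v hsm hcs hcond).trans (mul_le_mul_right hQ _)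
    rw [n2, n1, ENNReal.ofReal_rpow_of_pos (by positivity),
      ENNReal.ofReal_rpow_of_pos (by positivity), ← ENNReal.ofReal_mul (by positivity),
      ← ENNReal.ofReal_mul (by positivity), ENNReal.ofReal_le_ofReal_iff (by positivity),
      Real.mul_rpow (by positivity) hA.le, Real.mul_rpow (by positivity) hB.le,
      ← Real.rpow_mul ht.le, ← Real.rpow_mul ht.le] at hfinal
    have x1 : (N : ℝ) / 2 * (2 + 4 * α / N) = (2 * r - 2 * α) + (4 * α + (N - 2 * r)) := by
      field_simp; ring
    have x2 : (N : ℝ) * (4 * α / N) = 4 * α := by field_simp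
    rw [x1, x2, Real.rpow_add ht] at hfinal
    have x3 : 0 < t ^ (4 * α + ((N : ℝ) - 2 * r)) := by positivity
    refine le_of_mul_le_mul_right ?_ x3
    calc _ = _ := by ring
      _ ≤ _ := hfinal
      _ = _ := by rw [Real.rpow_add ht]; ring
  have T1 := tendsto_rpow_atTop (show 0 < (N : ℝ) / 2 by positivity)
  have T2 := (tendsto_rpow_atTop (show 0 < 2 * r - 2 * α by linarith)).const_mul_atTop
    (show 0 < A ^ (2 + 4 * α / (N : ℝ)) by positivity)
  obtain ⟨t, ⟨h1, h2⟩, h3⟩ := (((Filter.eventually_ge_atTop (1 : ℝ)).and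
    (T1.eventually_ge_atTop (A / (k * B)))).and
    (T2.eventually_gt_atTop (C * B ^ (4 * α / (N : ℝ)) * K))).exists
  exact absurd (main t h1 h2) (not_le.2 h3)
end

section
/- Let N ≥ 1, r, s, c ∈ (0,1), α_s, α_r, α_c > 0, and let ρ > 0 and λ > 0 with 1/λ < ρ/2. Let φ : ℝ^N → ℝ be twice continuously differentiable with φ and D²φ bounded, and suppose φ(x) = φ(0) for all |x| < ρ. Then there exists a constant C > 0 (depending only on N, r, s, c, α_s, α_r, α_c) such that the operator L_λ applied to φ satisfies: (i) |(L_λ φ)(x)| ≤ C λ^{2r−2c} ρ^{−2c} ‖φ‖_∞ for |x| < 1/λ; (ii) |(L_λ φ)(x)| ≤ C ( ρ^{2−2r} ‖D²φ‖_∞ + ρ^{−2r} ‖φ‖_∞ ) for 1/λ < |x| < ρ; (iii) |(L_λ φ)(x)| ≤ C ( ρ^{2−2r} ‖D²φ‖_∞ + (ρ^{−2r} + λ^{2r−2c−N} ρ^{−N−2c}) ‖φ‖_∞ ) for |x| > ρ. -/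
open MeasureTheory ENNReal Filter

/-- The kernel of the rescaled coupled operator `L_λ`: the diffusion exponent depends on
which of the two regions `{|·| < 1/λ}`, `{|·| > 1/λ}` the points `x` and `y` belong to. -/
noncomputable def rescaledKernel (N : ℕ) (r s c αs αr αc lam : ℝ)
    (x y : EuclideanSpace ℝ (Fin N)) : ℝ :=
  if ‖x‖ < 1 / lam then
    (if ‖y‖ < 1 / lam then αs * lam ^ (2 * r - 2 * s) / ‖x - y‖ ^ ((N : ℝ) + 2 * s)
     else αc * lam ^ (2 * r - 2 * c) / ‖x - y‖ ^ ((N : ℝ) + 2 * c))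
  else
    (if ‖y‖ < 1 / lam then αc * lam ^ (2 * r - 2 * c) / ‖x - y‖ ^ ((N : ℝ) + 2 * c)
     else αr / ‖x - y‖ ^ ((N : ℝ) + 2 * r))

/-- `ℓ` is the Cauchy principal value at `x` of the integral of `g` over `ℝ^N`. -/
def IsPVIntegral {N : ℕ} (g : EuclideanSpace ℝ (Fin N) → ℝ) (x : EuclideanSpace ℝ (Fin N))
    (ℓ : ℝ) : Prop :=
  Tendsto (fun ε : ℝ => ∫ y in {y : EuclideanSpace ℝ (Fin N) | ε < ‖y - x‖}, g y)
    (nhdsWithin 0 (Set.Ioi 0)) (nhds ℓ)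

/-- near part of the radial dominating function -/
noncomputable def radNear (q R t : ℝ) : ℝ := (Set.Iio R).indicator (fun t : ℝ => t ^ q) t

/-- far part of the radial dominating function -/
noncomputable def radFar (q R t : ℝ) : ℝ := (Set.Ici R).indicator (fun t : ℝ => t ^ q) t

lemma radNear_eq (N : ℕ) (hN : 1 ≤ N) (q R : ℝ) (y : ℝ) (hy : y ∈ Set.Ioi (0:ℝ)) :
    y ^ (N - 1) * radNear q R y = (Set.Iio R).indicator (fun t : ℝ => t ^ (q + (N:ℝ) - 1)) y := by
  have hy' : 0 < y := hy
  unfold radNear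
  by_cases h : y < R
  · rw [Set.indicator_of_mem (by exact h), Set.indicator_of_mem (by exact h), ← Real.rpow_natCast,
      ← Real.rpow_add hy', Nat.cast_sub hN]
    congr 1; push_cast; ring
  · rw [Set.indicator_of_notMem (by exact h), Set.indicator_of_notMem (by exact h), mul_zero]

lemma radFar_eq (N : ℕ) (hN : 1 ≤ N) (q R : ℝ) (y : ℝ) (hy : y ∈ Set.Ioi (0:ℝ)) :
    y ^ (N - 1) * radFar q R y = (Set.Ici R).indicator (fun t : ℝ => t ^ (q + (N:ℝ) - 1)) y := by
  have hy' : 0 < y := hy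
  unfold radFar
  by_cases h : R ≤ y
  · rw [Set.indicator_of_mem (by exact h), Set.indicator_of_mem (by exact h), ← Real.rpow_natCast,
      ← Real.rpow_add hy', Nat.cast_sub hN]
    congr 1; push_cast; ring
  · rw [Set.indicator_of_notMem (by exact h), Set.indicator_of_notMem (by exact h), mul_zero]

lemma Ioi_inter_Ici' {R : ℝ} (hR : 0 < R) : Set.Ioi (0:ℝ) ∩ Set.Ici R = Set.Ici R := by
  ext t; simp; intro h; linarith

lemma Ioi_inter_Iio' {R : ℝ} : Set.Ioi (0:ℝ) ∩ Set.Iio R = Set.Ioo 0 R := by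
  ext t; simp

lemma radNear_integral (N : ℕ) (hN : 1 ≤ N) (q R : ℝ) (hR : 0 < R) (hq : 0 < q + N) :
    Integrable (fun z : EuclideanSpace ℝ (Fin N) => radNear q R ‖z‖) ∧
    ∫ z : EuclideanSpace ℝ (Fin N), radNear q R ‖z‖ =
      N * volume.real (Metric.ball (0 : EuclideanSpace ℝ (Fin N)) 1) * (R ^ (q + N) / (q + N)) := by
  have : Nonempty (Fin N) := ⟨⟨0, hN⟩⟩
  constructor
  · rw [integrable_fun_norm_addHaar volume (f := radNear q R)]
    simp only [finrank_euclideanSpace_fin, smul_eq_mul]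
    rw [integrableOn_congr_fun (radNear_eq N hN q R) measurableSet_Ioi, IntegrableOn,
      integrable_indicator_iff measurableSet_Iio, IntegrableOn,
      Measure.restrict_restrict measurableSet_Iio, Set.inter_comm, Ioi_inter_Iio']
    exact (((intervalIntegral.intervalIntegrable_rpow' (a := 0) (b := R) (by linarith)).1).mono_set
      Set.Ioo_subset_Ioc_self)
  · rw [integral_fun_norm_addHaar volume (radNear q R)]
    simp only [finrank_euclideanSpace_fin, smul_eq_mul]
    rw [setIntegral_congr_fun measurableSet_Ioi (radNear_eq N hN q R),
      setIntegral_indicator measurableSet_Iio, Ioi_inter_Iio', ← integral_Ioc_eq_integral_Ioo,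
      ← intervalIntegral.integral_of_le hR.le, integral_rpow (Or.inl (by linarith))]
    have e : q + (N:ℝ) - 1 + 1 = q + N := by ring
    rw [e, Real.zero_rpow hq.ne', sub_zero, nsmul_eq_mul]
    ring

lemma radFar_integral (N : ℕ) (hN : 1 ≤ N) (q R : ℝ) (hR : 0 < R) (hq : q + N < 0) :
    Integrable (fun z : EuclideanSpace ℝ (Fin N) => radFar q R ‖z‖) ∧
    ∫ z : EuclideanSpace ℝ (Fin N), radFar q R ‖z‖ =
      N * volume.real (Metric.ball (0 : EuclideanSpace ℝ (Fin N)) 1) * (R ^ (q + N) / (-(q + N))) := by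
  have : Nonempty (Fin N) := ⟨⟨0, hN⟩⟩
  constructor
  · rw [integrable_fun_norm_addHaar volume (f := radFar q R)]
    simp only [finrank_euclideanSpace_fin, smul_eq_mul]
    rw [integrableOn_congr_fun (radFar_eq N hN q R) measurableSet_Ioi, IntegrableOn,
      integrable_indicator_iff measurableSet_Ici, IntegrableOn,
      Measure.restrict_restrict measurableSet_Ici, Set.inter_comm, Ioi_inter_Ici' hR,
      ← IntegrableOn, integrableOn_Ici_iff_integrableOn_Ioi]
    exact integrableOn_Ioi_rpow_of_lt (by linarith) hR
  · rw [integral_fun_norm_addHaar volume (radFar q R)]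
    simp only [finrank_euclideanSpace_fin, smul_eq_mul]
    rw [setIntegral_congr_fun measurableSet_Ioi (radFar_eq N hN q R),
      setIntegral_indicator measurableSet_Ici, Ioi_inter_Ici' hR, integral_Ici_eq_integral_Ioi,
      integral_Ioi_rpow_of_lt (by linarith) hR]
    have e : q + (N:ℝ) - 1 + 1 = q + N := by ring
    rw [e, nsmul_eq_mul, div_neg, neg_div]
    ring

lemma ball_integral (N : ℕ) (x : EuclideanSpace ℝ (Fin N)) (R : ℝ) (hR : 0 < R) :
    Integrable (fun z : EuclideanSpace ℝ (Fin N) => (Metric.ball (-x) R).indicator (fun _ => (1:ℝ)) z) ∧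
    ∫ z : EuclideanSpace ℝ (Fin N), (Metric.ball (-x) R).indicator (fun _ => (1:ℝ)) z =
      volume.real (Metric.ball (0 : EuclideanSpace ℝ (Fin N)) 1) * R ^ (N : ℝ) := by
  constructor
  · rw [integrable_indicator_iff Metric.isOpen_ball.measurableSet]
    exact integrableOn_const (measure_ball_lt_top.ne) (by simp)
  · rw [integral_indicator Metric.isOpen_ball.measurableSet]
    simp only [integral_const, MeasurableSet.univ, measureReal_restrict_apply, Set.univ_inter,
      smul_eq_mul, mul_one]
    rw [Measure.real, Measure.addHaar_ball_of_pos volume _ hR, ENNReal.toReal_mul,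
      ENNReal.toReal_ofReal (by positivity), Measure.real, finrank_euclideanSpace_fin,
      Real.rpow_natCast, mul_comm]

lemma pv_bound {N : ℕ} (F : EuclideanSpace ℝ (Fin N) → ℝ) (x : EuclideanSpace ℝ (Fin N)) (ℓ : ℝ)
    (h : IsPVIntegral F x ℓ) (L : EuclideanSpace ℝ (Fin N) →L[ℝ] ℝ) (a p R : ℝ) (hp : 0 < p)
    (G : EuclideanSpace ℝ (Fin N) → ℝ) (hG : Integrable G) (hG0 : ∀ z, 0 ≤ G z)
    (hFG : ∀ z, z ≠ 0 → |F (x + z) - (Metric.ball 0 R).indicator (fun z => L z * (a / ‖z‖ ^ p)) z| ≤ G z) :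
    |ℓ| ≤ ∫ z, G z := by
  set g : EuclideanSpace ℝ (Fin N) → ℝ :=
    (Metric.ball 0 R).indicator (fun z => L z * (a / ‖z‖ ^ p)) with hg
  have godd : ∀ z, g (-z) = - g z := by
    intro z
    by_cases hz : z ∈ Metric.ball (0 : EuclideanSpace ℝ (Fin N)) R
    · have hz' : -z ∈ Metric.ball (0 : EuclideanSpace ℝ (Fin N)) R := by simpa using hz
      simp [hg, Set.indicator_of_mem hz, Set.indicator_of_mem hz']
    · have hz' : -z ∉ Metric.ball (0 : EuclideanSpace ℝ (Fin N)) R := by simpa using hz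
      simp [hg, Set.indicator_of_notMem hz, Set.indicator_of_notMem hz']
  refine le_of_tendsto h.abs ?_
  filter_upwards [self_mem_nhdsWithin] with ε hε
  have hε : 0 < ε := hε
  have hm : MeasurableSet {z : EuclideanSpace ℝ (Fin N) | ε < ‖z‖} :=
    measurableSet_lt measurable_const measurable_norm
  have hshift : ∫ y in {y : EuclideanSpace ℝ (Fin N) | ε < ‖y - x‖}, F y
      = ∫ z in {z : EuclideanSpace ℝ (Fin N) | ε < ‖z‖}, F (x + z) := by
    rw [← (measurePreserving_add_left volume x).setIntegral_preimage_emb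
      (measurableEmbedding_addLeft x)]
    congr 2
    ext z; simp
  rw [hshift]
  have hgm : Measurable g := by
    apply Measurable.indicator _ Metric.isOpen_ball.measurableSet
    fun_prop
  have hgi : IntegrableOn g {z | ε < ‖z‖} := by
    have : IntegrableOn g (Metric.ball 0 R ∩ {z | ε < ‖z‖}) := by
      refine Measure.integrableOn_of_bounded (M := ‖L‖ * R * (|a| / ε ^ p)) ?_
        hgm.aestronglyMeasurable ?_
      · exact ((measure_mono Set.inter_subset_left).trans_lt measure_ball_lt_top).ne
      · refine (ae_restrict_iff' (Metric.isOpen_ball.measurableSet.inter hm)).2 (.of_forall ?_)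
        rintro z ⟨hz1, hz2⟩
        have hz2 : ε < ‖z‖ := hz2
        rw [hg, Set.indicator_of_mem hz1, norm_mul, norm_div, Real.norm_eq_abs a,
          Real.norm_of_nonneg (by positivity : 0 ≤ ‖z‖ ^ p)]
        have hz3 : ‖z‖ < R := by simpa using hz1
        have hR : 0 < R := (norm_nonneg z).trans_lt hz3
        have h1 : ‖L z‖ ≤ ‖L‖ * R := (L.le_opNorm z).trans (by gcongr)
        gcongr
    refine (integrable_indicator_iff hm).1 ?_
    refine ((integrable_indicator_iff (Metric.isOpen_ball.measurableSet.inter hm)).2 this).congr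
      (.of_forall fun z => ?_)
    by_cases h1 : z ∈ Metric.ball (0 : EuclideanSpace ℝ (Fin N)) R <;>
      by_cases h2 : ε < ‖z‖ <;> simp_all [Set.indicator]
  have hg0 : ∫ z in {z : EuclideanSpace ℝ (Fin N) | ε < ‖z‖}, g z = 0 := by
    rw [← integral_indicator hm]
    have h1 := integral_neg_eq_self
      (({z : EuclideanSpace ℝ (Fin N) | ε < ‖z‖}).indicator g) volume
    have h2 : ∀ z, (({z : EuclideanSpace ℝ (Fin N) | ε < ‖z‖}).indicator g) (-z) =
        - (({z : EuclideanSpace ℝ (Fin N) | ε < ‖z‖}).indicator g) z := by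
      intro z
      by_cases h2 : ε < ‖z‖ <;> simp [Set.indicator, h2, godd]
    simp only [h2, integral_neg] at h1
    linarith
  by_cases hF : IntegrableOn (fun z => F (x + z)) {z | ε < ‖z‖}
  · have : ∫ z in {z : EuclideanSpace ℝ (Fin N) | ε < ‖z‖}, F (x + z) =
        ∫ z in {z : EuclideanSpace ℝ (Fin N) | ε < ‖z‖}, (F (x + z) - g z) := by
      rw [integral_sub hF hgi, hg0, sub_zero]
    rw [this, ← Real.norm_eq_abs]
    refine (norm_integral_le_of_norm_le hG.integrableOn ?_).trans
      (setIntegral_le_integral hG (.of_forall hG0))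
    refine (ae_restrict_iff' hm).2 (.of_forall fun z hz => ?_)
    refine hFG z ?_
    rintro rfl
    have hz : ε < ‖(0 : EuclideanSpace ℝ (Fin N))‖ := hz
    rw [norm_zero] at hz; linarith
  · rw [integral_undef hF, abs_zero]
    exact integral_nonneg hG0

lemma taylor_bound {N : ℕ} (φ : EuclideanSpace ℝ (Fin N) → ℝ) (hφ : ContDiff ℝ 2 φ) (M : ℝ)
    (hM : ∀ x, ‖iteratedFDeriv ℝ 2 φ x‖ ≤ M) (x z : EuclideanSpace ℝ (Fin N)) :
    |φ (x + z) - φ x - fderiv ℝ φ x z| ≤ M * ‖z‖ ^ (2:ℝ) := by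
  have hd : Differentiable ℝ (fderiv ℝ φ) :=
    (hφ.fderiv_right (m := 1) (by norm_num)).differentiable (by norm_num)
  have hM0 : 0 ≤ M := (norm_nonneg _).trans (hM 0)
  have hlip : ∀ w, ‖fderiv ℝ φ w - fderiv ℝ φ x‖ ≤ M * ‖w - x‖ := fun w =>
    convex_univ.norm_image_sub_le_of_norm_fderiv_le (𝕜 := ℝ) (fun u _ => hd u)
      (fun u _ => by
        rw [← norm_iteratedFDeriv_one, norm_iteratedFDeriv_fderiv]; exact hM u)
      (Set.mem_univ _) (Set.mem_univ _)
  have := (convex_closedBall x ‖z‖).norm_image_sub_le_of_norm_fderiv_le' (𝕜 := ℝ) (f := φ)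
    (φ := fderiv ℝ φ x) (C := M * ‖z‖) (x := x) (y := x + z)
    (fun u _ => (hφ.differentiable (by norm_num)) u)
    (fun u hu => (hlip u).trans (by
      have : ‖u - x‖ ≤ ‖z‖ := by simpa [dist_eq_norm] using hu
      gcongr))
    (by simp) (by simp)
  rw [add_sub_cancel_left] at this
  rw [← Real.norm_eq_abs]
  refine this.trans (le_of_eq ?_)
  rw [Real.rpow_two]; ring

lemma half_rpow (ρ q : ℝ) (hρ : 0 < ρ) : (ρ / 2) ^ q = (1 / 2 : ℝ) ^ q * ρ ^ q := by
  rw [← Real.mul_rpow (by norm_num) hρ.le]; congr 1; ring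

lemma radNear_nonneg (q R t : ℝ) (ht : 0 ≤ t) : 0 ≤ radNear q R t := by
  unfold radNear
  by_cases h : t < R
  · rw [Set.indicator_of_mem (by exact h)]; positivity
  · rw [Set.indicator_of_notMem (by exact h)]

lemma radFar_nonneg (q R t : ℝ) (ht : 0 ≤ t) : 0 ≤ radFar q R t := by
  unfold radFar
  by_cases h : R ≤ t
  · rw [Set.indicator_of_mem (by exact h)]; positivity
  · rw [Set.indicator_of_notMem (by exact h)]

lemma radNear_of_lt {q R t : ℝ} (h : t < R) : radNear q R t = t ^ q :=
  Set.indicator_of_mem (by exact h) _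

lemma radFar_of_le {q R t : ℝ} (h : R ≤ t) : radFar q R t = t ^ q :=
  Set.indicator_of_mem (by exact h) _

/-- Common pointwise-to-integral estimate for the exterior cases. -/
lemma exterior_bound (N : ℕ) (hN : 1 ≤ N) (r αr R lam' M M₂ D : ℝ)
    (hr : r ∈ Set.Ioo (0 : ℝ) 1) (hαr : 0 < αr) (hR : 0 < R) (hl : 0 < lam')
    (hM : 0 ≤ M) (hM₂ : 0 ≤ M₂) (hD : 0 ≤ D)
    (F : EuclideanSpace ℝ (Fin N) → ℝ) (x : EuclideanSpace ℝ (Fin N)) (ℓ : ℝ)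
    (h : IsPVIntegral F x ℓ) (L : EuclideanSpace ℝ (Fin N) →L[ℝ] ℝ)
    (hnear : ∀ z, z ≠ 0 → ‖z‖ < R →
      |F (x + z) - L z * (αr / ‖z‖ ^ ((N : ℝ) + 2 * r))| ≤
        M₂ * ‖z‖ ^ (2:ℝ) * (αr / ‖z‖ ^ ((N : ℝ) + 2 * r)))
    (hfar1 : ∀ z, R ≤ ‖z‖ → lam' ≤ ‖x + z‖ →
      |F (x + z)| ≤ 2 * M * (αr / ‖z‖ ^ ((N : ℝ) + 2 * r)))
    (hfar2 : ∀ z, R ≤ ‖z‖ → ‖x + z‖ < lam' → |F (x + z)| ≤ D) :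
    |ℓ| ≤ αr * M₂ * (N * volume.real (Metric.ball (0 : EuclideanSpace ℝ (Fin N)) 1) *
          (R ^ (2 - 2 * r) / (2 - 2 * r)))
      + 2 * M * αr * (N * volume.real (Metric.ball (0 : EuclideanSpace ℝ (Fin N)) 1) *
          (R ^ (-(2 * r)) / (2 * r)))
      + D * (volume.real (Metric.ball (0 : EuclideanSpace ℝ (Fin N)) 1) * lam' ^ (N : ℝ)) := by
  obtain ⟨hr0, hr1⟩ := hr
  obtain ⟨iA, eA⟩ := radNear_integral N hN (2 - ((N:ℝ) + 2 * r)) R hR (by linarith)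
  obtain ⟨iB, eB⟩ := radFar_integral N hN (-((N:ℝ) + 2 * r)) R hR (by linarith)
  obtain ⟨iC, eC⟩ := ball_integral N x lam' hl
  rw [show 2 - ((N:ℝ) + 2 * r) + N = 2 - 2 * r by ring] at eA
  rw [show -((N:ℝ) + 2 * r) + N = -(2 * r) by ring, neg_neg] at eB
  have hind : ∀ z, 0 ≤ (Metric.ball (-x) lam').indicator (fun _ => (1:ℝ)) z := fun z =>
    Set.indicator_nonneg (fun _ _ => zero_le_one) z
  have hNp : (1:ℝ) ≤ N := by exact_mod_cast hN
  have key := pv_bound F x ℓ h L αr ((N : ℝ) + 2 * r) R (by linarith)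
    (fun z => αr * M₂ * radNear (2 - ((N:ℝ) + 2 * r)) R ‖z‖
      + 2 * M * αr * radFar (-((N:ℝ) + 2 * r)) R ‖z‖
      + D * (Metric.ball (-x) lam').indicator (fun _ => (1:ℝ)) z)
    (((iA.const_mul _).add (iB.const_mul _)).add (iC.const_mul _))
    (fun z => by
      have h1 := radNear_nonneg (2 - ((N:ℝ) + 2 * r)) R ‖z‖ (norm_nonneg z)
      have h2 := radFar_nonneg (-((N:ℝ) + 2 * r)) R ‖z‖ (norm_nonneg z)
      have h3 := hind z
      positivity)
    (fun z hz => by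
      have h1 := radNear_nonneg (2 - ((N:ℝ) + 2 * r)) R ‖z‖ (norm_nonneg z)
      have h2 := radFar_nonneg (-((N:ℝ) + 2 * r)) R ‖z‖ (norm_nonneg z)
      have h3 := hind z
      have hz0 : 0 < ‖z‖ := norm_pos_iff.2 hz
      have h1' : 0 ≤ αr * M₂ * radNear (2 - ((N:ℝ) + 2 * r)) R ‖z‖ := by positivity
      have h2' : 0 ≤ 2 * M * αr * radFar (-((N:ℝ) + 2 * r)) R ‖z‖ := by positivity
      have h3' : 0 ≤ D * (Metric.ball (-x) lam').indicator (fun _ => (1:ℝ)) z := by positivity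
      by_cases hzR : ‖z‖ < R
      · rw [Set.indicator_of_mem (by simpa using hzR)]
        have h4 := hnear z hz hzR
        have h5 : M₂ * ‖z‖ ^ (2:ℝ) * (αr / ‖z‖ ^ ((N : ℝ) + 2 * r)) =
            αr * M₂ * radNear (2 - ((N:ℝ) + 2 * r)) R ‖z‖ := by
          rw [radNear_of_lt hzR, Real.rpow_sub hz0]; ring
        rw [h5] at h4
        linarith
      · rw [Set.indicator_of_notMem (by simpa using hzR), sub_zero]
        push Not at hzR
        by_cases hy : ‖x + z‖ < lam'
        · have h4 := hfar2 z hzR hy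
          rw [Set.indicator_of_mem (by
            rw [Metric.mem_ball, dist_eq_norm, sub_neg_eq_add, add_comm]; exact hy)] at h3' ⊢
          linarith
        · have h4 := hfar1 z hzR (not_lt.1 hy)
          have h5 : 2 * M * (αr / ‖z‖ ^ ((N : ℝ) + 2 * r)) =
              2 * M * αr * radFar (-((N:ℝ) + 2 * r)) R ‖z‖ := by
            rw [radFar_of_le hzR, Real.rpow_neg hz0.le]; ring
          rw [h5] at h4
          linarith)
  have iAB : Integrable (fun z : EuclideanSpace ℝ (Fin N) =>
      αr * M₂ * radNear (2 - ((N:ℝ) + 2 * r)) R ‖z‖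
      + 2 * M * αr * radFar (-((N:ℝ) + 2 * r)) R ‖z‖) := (iA.const_mul _).add (iB.const_mul _)
  rw [integral_add iAB (iC.const_mul _),
    integral_add (iA.const_mul _) (iB.const_mul _), integral_const_mul, integral_const_mul,
    integral_const_mul, eA, eB, eC] at key
  exact key

/-- Pointwise bounds for the rescaled operator `L_λ` applied to a `W^{2,∞}` function which is
constant on the ball `B_ρ(0)`, where `1/λ < ρ/2`. -/
theorem rescaled_operator_bounds (N : ℕ) (hN : 1 ≤ N) (r s c : ℝ)
    (hr : r ∈ Set.Ioo (0 : ℝ) 1) (hs : s ∈ Set.Ioo (0 : ℝ) 1) (hc : c ∈ Set.Ioo (0 : ℝ) 1)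
    (αs αr αc : ℝ) (hαs : 0 < αs) (hαr : 0 < αr) (hαc : 0 < αc) :
    ∃ C : ℝ, 0 < C ∧ ∀ ρ lam : ℝ, 0 < ρ → 0 < lam → 1 / lam < ρ / 2 →
      ∀ φ : EuclideanSpace ℝ (Fin N) → ℝ, ContDiff ℝ 2 φ →
      ∀ Mφ M₂ : ℝ, (∀ x, |φ x| ≤ Mφ) → (∀ x, ‖iteratedFDeriv ℝ 2 φ x‖ ≤ M₂) →
      (∀ x : EuclideanSpace ℝ (Fin N), ‖x‖ < ρ → φ x = φ 0) →
      ∀ x : EuclideanSpace ℝ (Fin N), ∀ ℓ : ℝ,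
        IsPVIntegral (fun y => (φ y - φ x) * rescaledKernel N r s c αs αr αc lam x y) x ℓ →
        (‖x‖ < 1 / lam → |ℓ| ≤ C * lam ^ (2 * r - 2 * c) * ρ ^ (-(2 * c)) * Mφ) ∧
        (1 / lam < ‖x‖ → ‖x‖ < ρ →
          |ℓ| ≤ C * (ρ ^ (2 - 2 * r) * M₂ + ρ ^ (-(2 * r)) * Mφ)) ∧
        (ρ < ‖x‖ →
          |ℓ| ≤ C * (ρ ^ (2 - 2 * r) * M₂ +
            (ρ ^ (-(2 * r)) + lam ^ (2 * r - 2 * c - (N : ℝ)) * ρ ^ (-(N : ℝ) - 2 * c)) * Mφ)) := by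
  set V := volume.real (Metric.ball (0 : EuclideanSpace ℝ (Fin N)) 1) with hV
  have hV0 : 0 ≤ V := measureReal_nonneg
  have hr0 := hr.1
  have hr1 := hr.2
  have hc0 := hc.1
  have hNp : (1:ℝ) ≤ N := by exact_mod_cast hN
  set CA := αr * (N * V * ((1 / 2 : ℝ) ^ (2 - 2 * r) / (2 - 2 * r))) with hCA
  set CB := 2 * αr * (N * V * ((1 / 2 : ℝ) ^ (-(2 * r)) / (2 * r))) with hCB
  set CD := 2 * αc * V * (1 / 2 : ℝ) ^ (-((N : ℝ) + 2 * c)) with hCD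
  set CI := 2 * αc * (N * V * ((1 / 2 : ℝ) ^ (-(2 * c)) / (2 * c))) with hCI
  have h2r : 0 < 2 - 2 * r := by linarith
  have hCA0 : 0 ≤ CA := by positivity
  have hCB0 : 0 ≤ CB := by positivity
  have hCD0 : 0 ≤ CD := by positivity
  have hCI0 : 0 ≤ CI := by positivity
  refine ⟨CA + CB + CD + CI + 1, by positivity, ?_⟩
  intro ρ lam hρ hlam hlr φ hφ M M₂ hM hM₂ hconst x ℓ hℓ
  have hM0 : 0 ≤ M := (abs_nonneg _).trans (hM 0)
  have hM₂0 : 0 ≤ M₂ := (norm_nonneg _).trans (hM₂ 0)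
  have hil : 0 < 1 / lam := by positivity
  have hdiff : ∀ a b, |φ a - φ b| ≤ 2 * M := fun a b => by
    have h1 := abs_le.1 (hM a)
    have h2 := abs_le.1 (hM b)
    rw [abs_le]; constructor <;> linarith
  have hxz : ∀ z, ‖x - (x + z)‖ = ‖z‖ := fun z => by rw [sub_add_cancel_left, norm_neg]
  have htri : ∀ z, ‖x + z‖ ≤ ‖x‖ + ‖z‖ := fun z => norm_add_le x z
  have htri' : ∀ z, ‖x‖ ≤ ‖x + z‖ + ‖z‖ := fun z => by
    have := norm_sub_le (x + z) z
    rwa [add_sub_cancel_right] at this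
  have hR : 0 < ρ / 2 := by positivity
  have A1 : 0 ≤ ρ ^ (2 - 2 * r) * M₂ := by positivity
  have A2 : 0 ≤ ρ ^ (-(2 * r)) * M := by positivity
  have A3 : 0 ≤ lam ^ (2 * r - 2 * c - (N : ℝ)) * ρ ^ (-(N : ℝ) - 2 * c) * M := by positivity
  have eNear : αr * M₂ * (N * V * ((ρ / 2) ^ (2 - 2 * r) / (2 - 2 * r)))
      = CA * (ρ ^ (2 - 2 * r) * M₂) := by
    rw [half_rpow ρ _ hρ, hCA]; ring
  have eFar : 2 * M * αr * (N * V * ((ρ / 2) ^ (-(2 * r)) / (2 * r)))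
      = CB * (ρ ^ (-(2 * r)) * M) := by
    rw [half_rpow ρ _ hρ, hCB]; ring
  refine ⟨fun hx => ?_, fun hx1 hx2 => ?_, fun hx => ?_⟩
  · obtain ⟨iB, eB⟩ := radFar_integral N hN (-((N:ℝ) + 2 * c)) (ρ / 2) hR (by linarith)
    rw [show -((N:ℝ) + 2 * c) + N = -(2 * c) by ring, neg_neg] at eB
    have key := pv_bound _ x ℓ hℓ 0 0 1 1 one_pos
      (fun z => 2 * M * (αc * lam ^ (2 * r - 2 * c)) * radFar (-((N:ℝ) + 2 * c)) (ρ / 2) ‖z‖)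
      (iB.const_mul _)
      (fun z => by
        have h2 := radFar_nonneg (-((N:ℝ) + 2 * c)) (ρ / 2) ‖z‖ (norm_nonneg z)
        positivity)
      (fun z hz => by
        have h2 := radFar_nonneg (-((N:ℝ) + 2 * c)) (ρ / 2) ‖z‖ (norm_nonneg z)
        have hz0 : 0 < ‖z‖ := norm_pos_iff.2 hz
        have : (Metric.ball (0 : EuclideanSpace ℝ (Fin N)) 1).indicator
            (fun z => (0 : EuclideanSpace ℝ (Fin N) →L[ℝ] ℝ) z * (0 / ‖z‖ ^ (1:ℝ))) z = 0 := by
          simp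
        rw [this, sub_zero]
        by_cases hy : ‖x + z‖ < ρ
        · rw [hconst _ hy, hconst x (by linarith), sub_self, zero_mul, abs_zero]
          positivity
        · push Not at hy
          have hzR : ρ / 2 ≤ ‖z‖ := by linarith [htri z]
          rw [rescaledKernel, if_pos hx, if_neg (by linarith), hxz, radFar_of_le hzR, abs_mul,
            Real.rpow_neg hz0.le, abs_of_nonneg (a := αc * _ / _) (by positivity), mul_assoc (2 * M),
            ← div_eq_mul_inv]
          exact mul_le_mul_of_nonneg_right (hdiff _ _) (by positivity))
    rw [integral_const_mul, eB, ← hV, half_rpow ρ _ hρ] at key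
    have e : 2 * M * (αc * lam ^ (2 * r - 2 * c)) *
        (N * V * ((1 / 2 : ℝ) ^ (-(2 * c)) * ρ ^ (-(2 * c)) / (2 * c))) =
        CI * (lam ^ (2 * r - 2 * c) * ρ ^ (-(2 * c)) * M) := by
      rw [hCI]; ring
    rw [e] at key
    have A4 : 0 ≤ lam ^ (2 * r - 2 * c) * ρ ^ (-(2 * c)) * M := by positivity
    calc |ℓ| ≤ _ := key
      _ ≤ (CA + CB + CD + CI + 1) * (lam ^ (2 * r - 2 * c) * ρ ^ (-(2 * c)) * M) :=
        mul_le_mul_of_nonneg_right (by linarith) A4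
      _ = _ := by ring
  · have hL : fderiv ℝ φ x = 0 := by
      have : φ =ᶠ[nhds x] fun _ => φ 0 := by
        filter_upwards [Metric.isOpen_ball.mem_nhds (show x ∈ Metric.ball 0 ρ by simpa using hx2)]
          with y hy
        exact hconst y (by simpa using hy)
      rw [this.fderiv_eq]; simp
    have key := exterior_bound N hN r αr (ρ / 2) (1 / lam) M M₂ 0 hr hαr hR hil hM0 hM₂0 le_rfl
      _ x ℓ hℓ 0
      (fun z hz hzR => by
        have ht := taylor_bound φ hφ M₂ hM₂ x z
        rw [hL, ContinuousLinearMap.zero_apply, sub_zero] at ht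
        rw [ContinuousLinearMap.zero_apply, zero_mul, sub_zero]
        by_cases hy : ‖x + z‖ < ρ
        · rw [hconst _ hy, hconst x hx2, sub_self, zero_mul, abs_zero]
          positivity
        · rw [rescaledKernel, if_neg (by linarith), if_neg (by linarith), hxz, abs_mul,
            abs_of_nonneg (a := αr / _) (by positivity)]
          exact mul_le_mul_of_nonneg_right ht (by positivity))
      (fun z hzR hy => by
        rw [rescaledKernel, if_neg (by linarith), if_neg (by linarith), hxz, abs_mul,
            abs_of_nonneg (a := αr / _) (by positivity)]
        exact mul_le_mul_of_nonneg_right (hdiff _ _) (by positivity))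
      (fun z hzR hy => by
        rw [hconst (x + z) (by linarith), hconst x hx2, sub_self, zero_mul, abs_zero])
    rw [← hV, eNear, eFar, zero_mul, add_zero] at key
    have B1 := mul_nonneg (by linarith : 0 ≤ CB + CD + CI + 1) A1
    have B2 := mul_nonneg (by linarith : 0 ≤ CA + CD + CI + 1) A2
    linarith
  · have key := exterior_bound N hN r αr (ρ / 2) (1 / lam) M M₂
      (2 * M * (αc * lam ^ (2 * r - 2 * c) / (ρ / 2) ^ ((N:ℝ) + 2 * c)))
      hr hαr hR hil hM0 hM₂0 (by positivity)
      _ x ℓ hℓ (fderiv ℝ φ x)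
      (fun z hz hzR => by
        have ht := taylor_bound φ hφ M₂ hM₂ x z
        rw [rescaledKernel, if_neg (by linarith), if_neg (by linarith [htri' z]), hxz, ← sub_mul,
          abs_mul, abs_of_nonneg (a := αr / _) (by positivity)]
        exact mul_le_mul_of_nonneg_right ht (by positivity))
      (fun z hzR hy => by
        rw [rescaledKernel, if_neg (by linarith), if_neg (by linarith), hxz, abs_mul,
            abs_of_nonneg (a := αr / _) (by positivity)]
        exact mul_le_mul_of_nonneg_right (hdiff _ _) (by positivity))
      (fun z hzR hy => by
        rw [rescaledKernel, if_neg (by linarith), if_pos hy, hxz, abs_mul,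
            abs_of_nonneg (a := _ / _) (by positivity)]
        have := hdiff (x + z) x
        gcongr)
    have eD : 2 * M * (αc * lam ^ (2 * r - 2 * c) / (ρ / 2) ^ ((N:ℝ) + 2 * c)) *
        (V * (1 / lam) ^ (N : ℝ)) =
        CD * (lam ^ (2 * r - 2 * c - (N : ℝ)) * ρ ^ (-(N : ℝ) - 2 * c) * M) := by
      rw [hCD, div_eq_mul_inv (αc * _), ← Real.rpow_neg hR.le, half_rpow ρ _ hρ,
        Real.rpow_sub hlam (2 * r - 2 * c), Real.div_rpow zero_le_one hlam.le, Real.one_rpow,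
        show -(N : ℝ) - 2 * c = -((N : ℝ) + 2 * c) by ring]
      ring
    rw [← hV, eNear, eFar, eD] at key
    have B1 := mul_nonneg (by linarith : 0 ≤ CB + CD + CI + 1) A1
    have B2 := mul_nonneg (by linarith : 0 ≤ CA + CD + CI + 1) A2
    have B3 := mul_nonneg (by linarith : 0 ≤ CA + CB + CI + 1) A3
    linarith
end
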